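/- Assume Chowla's conjecture. Then for every ε > 0 there exists N such that for all n ≥ N, every nontrivial monotone decreasing graph property P_n of n-vertex graphs in which every graph has at most n^{3/2−ε} edges is evasive. -/

import Mathlib

/-- A deterministic decision tree over a set of Boolean variables indexed by `ι`. -/
inductive DecisionTree (ι : Type) : Type
  | leaf : Bool → DecisionTree ι
  | node : ι → DecisionTree ι → DecisionTree ι → DecisionTree ι

namespace DecisionTree

/-- Evaluate a decision tree on an input assignment. -/
def eval {ι : Type} : DecisionTree ι → (ι → Bool) → Bool
  | leaf b, _ => b
  | node i t f, x => if x i then t.eval x else f.eval x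

/-- The depth (worst-case number of queries) of a decision tree. -/
def depth {ι : Type} : DecisionTree ι → ℕ
  | leaf _ => 0
  | node _ t f => max t.depth f.depth + 1

end DecisionTree

/-- The variables of a graph property on `n` vertices: pairs `i < j`. -/
def EdgeVar (n : ℕ) := {p : Fin n × Fin n // p.1 < p.2}

/-- The graph on `Fin n` determined by an assignment to the adjacency variables. -/
def graphOfInput {n : ℕ} (x : EdgeVar n → Bool) : SimpleGraph (Fin n) :=
  SimpleGraph.fromRel (fun i j => ∃ h : i < j, x ⟨(i, j), h⟩ = true)

/-- The deterministic query (decision-tree) complexity of a set of graphs on `Fin n`,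
viewed as a Boolean function of the adjacency variables. -/
noncomputable def queryComplexity {n : ℕ} (P : Set (SimpleGraph (Fin n))) : ℕ :=
  sInf {d | ∃ T : DecisionTree (EdgeVar n),
    (∀ x, T.eval x = true ↔ graphOfInput x ∈ P) ∧ T.depth ≤ d}

/-- A set of graphs on `Fin n` is evasive if its query complexity is `n(n-1)/2`,
the total number of adjacency variables. -/
def Evasive {n : ℕ} (P : Set (SimpleGraph (Fin n))) : Prop :=
  queryComplexity P = n * (n - 1) / 2

/-- `G` contains a (not necessarily induced) subgraph isomorphic to `H`. -/
def ContainsCopy {V : Type} (H : SimpleGraph V) {W : Type} (G : SimpleGraph W) : Prop :=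
  ∃ f : V → W, Function.Injective f ∧ ∀ v w : V, H.Adj v w → G.Adj (f v) (f w)

/-- The forbidden-subgraph property `Q_n^H`: graphs on `Fin n` containing no copy of `H`. -/
def ForbiddenSubgraphProperty {V : Type} (H : SimpleGraph V) (n : ℕ) :
    Set (SimpleGraph (Fin n)) :=
  {G | ¬ ContainsCopy H G}

/-- A prime `p` is an `ε`-near Fermat prime if `2^s ∣ p - 1` and `(p-1)/2^s ≤ p^ε`
for some `s ≥ 0`. -/
def NearFermatPrime (ε : ℝ) (p : ℕ) : Prop :=
  p.Prime ∧ ∃ s : ℕ, 2 ^ s ∣ p - 1 ∧ (((p - 1) / 2 ^ s : ℕ) : ℝ) ≤ (p : ℝ) ^ ε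

/-- A set of graphs on `Fin n` is a (labelled-vertex-invariant) graph property if it is
invariant under relabeling of the vertices. -/
def IsGraphProperty {n : ℕ} (P : Set (SimpleGraph (Fin n))) : Prop :=
  ∀ σ : Equiv.Perm (Fin n), ∀ G : SimpleGraph (Fin n),
    G ∈ P → G.map σ.toEmbedding ∈ P

/-- A set of graphs is monotone decreasing if it is closed under deletion of edges. -/
def MonotoneDecreasing {n : ℕ} (P : Set (SimpleGraph (Fin n))) : Prop :=
  ∀ G G' : SimpleGraph (Fin n), G' ≤ G → G ∈ P → G' ∈ P

/-!
If `P` is monotone and not evasive, then the simplicial complex of the edge sets of the graphs in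
`P` is acyclic over every ring: a decision tree that leaves a variable unqueried matches up the
faces. By the fixed-point theorems of Smith and Oliver, a group which is an extension of a
`p`-group by a cyclic group by a `q`-group therefore fixes a nonempty face, so that some nonempty
graph in `P` is invariant under any such group of vertex permutations.

Write `n = p * k + r` with primes `p` and `r`, and let `𝔽_p^k` act on `k` blocks of size `p` by
translations, a cyclic group permute these blocks, twisted by a generator of `𝔽_pˣ`, while it
translates `𝔽_r`, and a subgroup of order `2 ^ β` of `𝔽_rˣ` act on `𝔽_r` by multiplication.
A nonempty invariant graph has at least `min (k * p * (p - 1)) (r * 2 ^ β) / 2` edges.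
If `p` and `2 ^ β` are both about `n ^ (1 / 2 - δ)` and `p` does not divide `n`, Chowla's conjecture
supplies a suitable prime `r = O(n ^ (1 - δ))` with `r ≡ n (mod p)` and `r ≡ 1 (mod 2 ^ β)`,
and this minimum is of order `n ^ (3 / 2 - 3 * δ)`.
-/

noncomputable section

open scoped Classical

section OrderComplex

variable {V : Type*} [PartialOrder V] {R : Type*} [CommRing R]

/-- The sign of the face `t` in the boundary of the chain `insert x t`, given by the number of
elements of `t` below `x`. -/
def incidenceSign (R : Type*) [CommRing R] (x : V) (t : Finset V) : R :=
  (-1) ^ (t.filter (· < x)).card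

lemma incidenceSign_mul_self (x : V) (t : Finset V) :
    incidenceSign R x t * incidenceSign R x t = 1 := by
  rw [incidenceSign, ← mul_pow, neg_one_mul, neg_neg, one_pow]

lemma incidenceSign_insert_of_lt {x y : V} {t : Finset V} (h : x < y) (hx : x ∉ t) :
    incidenceSign R y (insert x t) = -incidenceSign R y t := by
  rw [incidenceSign, Finset.filter_insert, if_pos h, Finset.card_insert_of_notMem (by simp [hx]),
    pow_succ, mul_neg_one, incidenceSign]

lemma incidenceSign_insert_of_not_lt {x y : V} {t : Finset V} (h : ¬ x < y) :
    incidenceSign R y (insert x t) = incidenceSign R y t := by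
  rw [incidenceSign, Finset.filter_insert, if_neg h, incidenceSign]

lemma incidenceSign_mul_insert {x y : V} {t : Finset V} (hxy : x ≠ y) (hx : x ∉ t) (hy : y ∉ t)
    (h : x ≤ y ∨ y ≤ x) :
    incidenceSign R x t * incidenceSign R y (insert x t) =
      -(incidenceSign R y t * incidenceSign R x (insert y t)) := by
  rcases h with h | h
  · have hlt := lt_of_le_of_ne h hxy
    rw [incidenceSign_insert_of_lt hlt hx, incidenceSign_insert_of_not_lt hlt.asymm]
    ring
  · have hlt := lt_of_le_of_ne h hxy.symm
    rw [incidenceSign_insert_of_lt hlt hy, incidenceSign_insert_of_not_lt hlt.asymm]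
    ring

lemma incidenceSign_insert_mul_insert {x y : V} {t : Finset V} (hxy : x ≠ y) (hx : x ∉ t)
    (hy : y ∉ t) (h : x ≤ y ∨ y ≤ x) :
    incidenceSign R y (insert x t) * incidenceSign R x (insert y t) =
      -(incidenceSign R x t * incidenceSign R y t) := by
  linear_combination
    incidenceSign R x t * incidenceSign R x (insert y t) *
      incidenceSign_mul_insert (R := R) hxy hx hy h -
    incidenceSign R y (insert x t) * incidenceSign R x (insert y t) *
      incidenceSign_mul_self (R := R) x t -
    incidenceSign R x t * incidenceSign R y t * incidenceSign_mul_self (R := R) x (insert y t)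

/-- The submodule of functions vanishing outside `K`. With `K` a simplicial complex these are its
simplicial chains in all degrees at once, a function `f` standing for the chain `∑ t, f t • t`. -/
def supportedOn (R : Type*) [CommRing R] {T : Type*} (K : Set T) : Submodule R (T → R) where
  carrier := {f | ∀ t ∉ K, f t = 0}
  add_mem' ha hb t ht := by simp [ha t ht, hb t ht]
  zero_mem' _ _ := rfl
  smul_mem' c f hf t ht := by simp [hf t ht]

lemma supportedOn_mono {T : Type*} {K L : Set T} (h : K ⊆ L) :
    supportedOn R K ≤ supportedOn R L :=
  fun _ hf t ht => hf t fun hK => ht (h hK)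

/-- The finite chains contained in a set `X`, including the empty one. -/
def orderComplex (X : Set V) : Set (Finset V) :=
  {t | ↑t ⊆ X ∧ IsChain (· ≤ ·) (t : Set V)}

lemma orderComplex_mono {X Y : Set V} (h : X ⊆ Y) : orderComplex X ⊆ orderComplex Y :=
  fun _ ht => ⟨ht.1.trans h, ht.2⟩

lemma mem_orderComplex_of_subset {X : Set V} {s t : Finset V} (ht : t ∈ orderComplex X)
    (hs : s ⊆ t) : s ∈ orderComplex X :=
  ⟨(Finset.coe_subset.2 hs).trans ht.1, ht.2.mono (Finset.coe_subset.2 hs)⟩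

lemma insert_mem_orderComplex {X : Set V} {t : Finset V} (ht : t ∈ orderComplex X) {a : V}
    (ha : a ∈ X) (h : ∀ x ∈ t, a ≤ x ∨ x ≤ a) : insert a t ∈ orderComplex X := by
  rw [orderComplex, Set.mem_ofPred_eq, Finset.coe_insert]
  exact ⟨Set.insert_subset ha ht.1, ht.2.insert fun x hx _ => h x hx⟩

lemma orderComplex_inter (X Y : Set V) :
    orderComplex (X ∩ Y) = orderComplex X ∩ orderComplex Y := by
  ext t
  simp only [orderComplex, Set.subset_inter_iff, Set.mem_inter_iff, Set.mem_ofPred_eq]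
  tauto

lemma orderComplex_union {X Y : Set V} (h : ∀ x ∈ X \ Y, ∀ y ∈ Y \ X, ¬ (x ≤ y ∨ y ≤ x)) :
    orderComplex (X ∪ Y) = orderComplex X ∪ orderComplex Y := by
  refine subset_antisymm (fun t ht => ?_)
    (Set.union_subset (orderComplex_mono Set.subset_union_left)
      (orderComplex_mono Set.subset_union_right))
  by_contra hcon
  simp only [orderComplex, Set.mem_union, Set.mem_ofPred_eq, ht.2, and_true, not_or,
    Set.not_subset] at hcon
  obtain ⟨⟨y, hyt, hyX⟩, x, hxt, hxY⟩ := hcon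
  exact h x ⟨(ht.1 hxt).resolve_right hxY, hxY⟩ y ⟨(ht.1 hyt).resolve_left hyX, hyX⟩
    (ht.2.total hxt hyt)

variable [Fintype V]

/-- The boundary map of all degrees at once, including the augmentation `{x} ↦ ∅`. It squares to
zero only on functions supported on chains, see `chainBoundary_chainBoundary`. -/
def chainBoundary (R V : Type*) [CommRing R] [PartialOrder V] [Fintype V] :
    (Finset V → R) →ₗ[R] (Finset V → R) where
  toFun f t := ∑ x ∈ tᶜ, incidenceSign R x t * f (insert x t)
  map_add' f g := by
    ext t
    simp only [Pi.add_apply, mul_add, Finset.sum_add_distrib]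
  map_smul' c f := by
    ext t
    simp only [Pi.smul_apply, smul_eq_mul, RingHom.id_apply, Finset.mul_sum]
    exact Finset.sum_congr rfl fun x _ => mul_left_comm _ _ _

lemma chainBoundary_apply (f : Finset V → R) (t : Finset V) :
    chainBoundary R V f t = ∑ x ∈ tᶜ, incidenceSign R x t * f (insert x t) := rfl

lemma chainBoundary_mem {X : Set V} {f : Finset V → R} (hf : f ∈ supportedOn R (orderComplex X)) :
    chainBoundary R V f ∈ supportedOn R (orderComplex X) := by
  intro t ht
  refine Finset.sum_eq_zero fun x _ => ?_
  rw [hf _ fun h => ht (mem_orderComplex_of_subset h (Finset.subset_insert x t)), mul_zero]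

lemma chainBoundary_chainBoundary {X : Set V} {f : Finset V → R}
    (hf : f ∈ supportedOn R (orderComplex X)) : chainBoundary R V (chainBoundary R V f) = 0 := by
  ext t
  simp only [chainBoundary_apply, Finset.mul_sum, Pi.zero_apply]
  rw [Finset.sum_sigma']
  refine Finset.sum_involution (fun z _ => ⟨z.2, z.1⟩) ?_ ?_ ?_ fun _ _ => rfl
  · rintro ⟨x, y⟩ h
    simp only [Finset.mem_sigma, Finset.mem_compl, Finset.mem_insert, not_or] at h
    by_cases hc : insert y (insert x t) ∈ orderComplex X
    · have hxy : x ≤ y ∨ y ≤ x := hc.2.total (by simp) (by simp)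
      rw [← mul_assoc, ← mul_assoc, Finset.insert_comm x y,
        incidenceSign_mul_insert (Ne.symm h.2.1) h.1 h.2.2 hxy]
      ring
    · have hc' : insert x (insert y t) ∉ orderComplex X := by rwa [Finset.insert_comm]
      simp [hf _ hc, hf _ hc']
  · rintro ⟨x, y⟩ h _ he
    simp only [Finset.mem_sigma, Finset.mem_compl, Finset.mem_insert, not_or] at h
    simp only [Sigma.mk.injEq, heq_eq_eq] at he
    exact h.2.1 he.1
  · rintro ⟨x, y⟩ h
    simp only [Finset.mem_sigma, Finset.mem_compl, Finset.mem_insert, not_or] at h ⊢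
    exact ⟨h.2.2, Ne.symm h.2.1, h.1⟩

/-- Vanishing of the reduced simplicial homology, with coefficients in `R`, of the order complex
of `X`. The empty set is not acyclic, as the empty chain is then a cycle but not a boundary. -/
def OrderAcyclic (R : Type*) [CommRing R] (X : Set V) : Prop :=
  ∀ f ∈ supportedOn R (orderComplex X), chainBoundary R V f = 0 →
    ∃ h ∈ supportedOn R (orderComplex X), chainBoundary R V h = f

/-- The cone over a simplicial chain with apex `a`. -/
def chainCone (a : V) (f : Finset V → R) (t : Finset V) : R :=
  if a ∈ t then incidenceSign R a (t.erase a) * f (t.erase a) else 0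

lemma chainBoundary_chainCone_of_notMem {a : V} {t : Finset V} (ha : a ∉ t) (f : Finset V → R) :
    chainBoundary R V (chainCone a f) t = f t := by
  rw [chainBoundary_apply, Finset.sum_eq_single a]
  · rw [chainCone, if_pos (by simp), Finset.erase_insert ha, ← mul_assoc, incidenceSign_mul_self,
      one_mul]
  · intro x _ hxa
    rw [chainCone, if_neg (by simp [ha, Ne.symm hxa]), mul_zero]
  · exact fun h => absurd (Finset.mem_compl.2 ha) h

lemma chainBoundary_chainCone_insert {X : Set V} {f : Finset V → R}
    (hf : f ∈ supportedOn R (orderComplex X)) {a : V} (hX : ∀ x ∈ X, a ≤ x ∨ x ≤ a)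
    {s : Finset V} (ha : a ∉ s) :
    chainBoundary R V (chainCone a f) (insert a s) =
      f (insert a s) - incidenceSign R a s * chainBoundary R V f s := by
  have hterm : ∀ x ∈ sᶜ.erase a, incidenceSign R x (insert a s) *
      chainCone a f (insert x (insert a s)) =
        -(incidenceSign R a s * (incidenceSign R x s * f (insert x s))) := by
    intro x hx
    obtain ⟨hxa, hxs⟩ : x ≠ a ∧ x ∉ s := by simpa using hx
    rw [chainCone, if_pos (by simp), Finset.insert_comm,
      Finset.erase_insert (by simp [ha, hxa.symm]), ← mul_assoc]
    by_cases hc : insert x s ∈ orderComplex X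
    · have hax : a ≤ x ∨ x ≤ a := hX x (hc.1 (by simp))
      rw [incidenceSign_insert_mul_insert hxa.symm ha hxs hax]
      ring
    · simp [hf _ hc]
  rw [chainBoundary_apply, chainBoundary_apply, Finset.compl_insert, Finset.sum_congr rfl hterm,
    Finset.sum_neg_distrib, ← Finset.mul_sum, ← Finset.add_sum_erase _ _ (Finset.mem_compl.2 ha)]
  linear_combination f (insert a s) * incidenceSign_mul_self (R := R) a s

lemma orderAcyclic_of_comparable {X : Set V} {a : V} (ha : a ∈ X)
    (hX : ∀ x ∈ X, a ≤ x ∨ x ≤ a) : OrderAcyclic R X := by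
  intro f hf hdf
  refine ⟨chainCone a f, fun t ht => ?_, funext fun t => ?_⟩
  · rw [chainCone]
    split_ifs with hat
    · rw [hf _ fun h => ht ?_, mul_zero]
      rw [← Finset.insert_erase hat]
      exact insert_mem_orderComplex h ha fun x hx => hX x (h.1 hx)
    · rfl
  · by_cases hat : a ∈ t
    · rw [← Finset.insert_erase hat, chainBoundary_chainCone_insert hf hX (Finset.notMem_erase a t),
        hdf, Pi.zero_apply, mul_zero, sub_zero]
    · exact chainBoundary_chainCone_of_notMem hat f

namespace OrderAcyclic

variable {X Y : Set V}

/-- Exactness of the Mayer–Vietoris sequence. -/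
lemma union (hX : OrderAcyclic R X) (hY : OrderAcyclic R Y) (hXY : OrderAcyclic R (X ∩ Y))
    (h : ∀ x ∈ X \ Y, ∀ y ∈ Y \ X, ¬ (x ≤ y ∨ y ≤ x)) : OrderAcyclic R (X ∪ Y) := by
  intro f hf hdf
  rw [orderComplex_union h] at hf
  set a : Finset V → R := (orderComplex X).indicator f
  have ha : a ∈ supportedOn R (orderComplex X) := fun t ht => Set.indicator_of_notMem ht f
  have hb : f - a ∈ supportedOn R (orderComplex Y) := by
    intro t ht
    by_cases htX : t ∈ orderComplex X
    · simp [a, htX]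
    · simp [a, htX, hf t (by simp [htX, ht])]
  have hdb : chainBoundary R V (f - a) = -chainBoundary R V a := by rw [map_sub, hdf, zero_sub]
  have hda : chainBoundary R V a ∈ supportedOn R (orderComplex (X ∩ Y)) := by
    intro t ht
    rw [orderComplex_inter, Set.mem_inter_iff, not_and_or] at ht
    rcases ht with ht | ht
    · exact chainBoundary_mem ha t ht
    · simpa [hdb] using chainBoundary_mem hb t ht
  obtain ⟨c, hc, hdc⟩ := hXY _ hda (chainBoundary_chainBoundary ha)
  have hcX := supportedOn_mono (orderComplex_mono Set.inter_subset_left) hc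
  have hcY := supportedOn_mono (orderComplex_mono Set.inter_subset_right) hc
  obtain ⟨u, hu, hdu⟩ := hX (a - c) (sub_mem ha hcX) (by rw [map_sub, hdc, sub_self])
  obtain ⟨v, hv, hdv⟩ := hY (f - a + c) (add_mem hb hcY) (by rw [map_add, hdb, hdc, neg_add_cancel])
  refine ⟨u + v, add_mem (supportedOn_mono (orderComplex_mono Set.subset_union_left) hu)
    (supportedOn_mono (orderComplex_mono Set.subset_union_right) hv), ?_⟩
  rw [map_add, hdu, hdv]
  abel

/-- If every element of `X` comparable to `x` is comparable to `b`, then adjoining `x` to `X`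
amounts to attaching a cone along a cone with apex `b`. -/
lemma insert_of_dominated (hX : OrderAcyclic R X) {x b : V} (hb : b ∈ X) (hxb : x ≤ b)
    (h : ∀ y ∈ X, x ≤ y ∨ y ≤ x → b ≤ y ∨ y ≤ b) : OrderAcyclic R (insert x X) := by
  set S : Set V := {y ∈ insert x X | x ≤ y ∨ y ≤ x}
  have hxS : x ∈ S := ⟨Set.mem_insert x X, Or.inl le_rfl⟩
  have hunion : insert x X = X ∪ S := by
    rw [Set.insert_eq, Set.union_comm]
    refine subset_antisymm (Set.union_subset_union_right X (Set.singleton_subset_iff.2 hxS))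
      (Set.union_subset Set.subset_union_left fun y hy => ?_)
    exact hy.1.symm
  rw [hunion]
  refine hX.union (orderAcyclic_of_comparable hxS fun y hy => hy.2)
    (orderAcyclic_of_comparable ⟨hb, Or.inr hb, Or.inl hxb⟩ fun y hy => h y hy.1 hy.2.2) ?_
  rintro y ⟨hyX, hyS⟩ z ⟨hzS, hzX⟩ hyz
  rw [hzS.1.resolve_right hzX] at hyz
  exact hyS ⟨Or.inr hyX, hyz.symm⟩

end OrderAcyclic

/-- The conically contractible case of Quillen's fibre lemma, `x ≤ c x ≥ a`: non-closed elements
can be removed one at a time, the maximal ones first, until only a cone with apex `a` is left. -/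
lemma orderAcyclic_of_closureOperator {X : Set V} (c : ClosureOperator V) (hc : ∀ x ∈ X, c x ∈ X)
    {a : V} (ha : a ∈ X) (hac : ∀ x ∈ X, a ≤ c x) : OrderAcyclic R X := by
  induction hm : {x ∈ X | ¬ c.IsClosed x}.ncard generalizing X a with
  | zero =>
    rw [Set.ncard_eq_zero] at hm
    have hclosed : ∀ x ∈ X, c x = x := by
      intro x hx
      by_contra hcx
      exact Set.eq_empty_iff_forall_notMem.1 hm x ⟨hx, fun h => hcx h.closure_eq⟩
    exact orderAcyclic_of_comparable ha fun x hx => Or.inl (hclosed x hx ▸ hac x hx)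
  | succ m ih =>
    obtain ⟨x, hxmax⟩ := (Set.toFinite {x ∈ X | ¬ c.IsClosed x}).exists_maximal
      (Set.nonempty_of_ncard_ne_zero (hm ▸ m.succ_ne_zero))
    obtain ⟨hxX, hxc⟩ := hxmax.prop
    have hmem : ∀ y ∈ X, c y ∈ X \ {x} := fun y hy =>
      ⟨hc y hy, fun h => hxc (h ▸ c.isClosed_closure y)⟩
    have hcard : {y ∈ X \ {x} | ¬ c.IsClosed y}.ncard = m := by
      have hdiff : {y ∈ X \ {x} | ¬ c.IsClosed y} = {y ∈ X | ¬ c.IsClosed y} \ {x} := by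
        ext y
        simp only [Set.mem_sdiff, Set.mem_ofPred_eq]
        tauto
      rw [hdiff, Set.ncard_sdiff_singleton_of_mem hxmax.prop, hm, Nat.add_sub_cancel]
    have hdel : OrderAcyclic R (X \ {x}) := ih (fun y hy => hmem y hy.1) (hmem a ha)
      (fun y hy => c.le_closure_iff.1 (hac y hy.1)) hcard
    rw [← Set.insert_sdiff_self_of_mem hxX]
    refine hdel.insert_of_dominated (hmem x hxX) (c.le_closure x) fun y hy hxy => ?_
    rcases hxy with hxy | hyx
    · by_cases hyc : c.IsClosed y
      · exact Or.inl (hyc.closure_le_iff.2 hxy)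
      · exact absurd (le_antisymm (hxmax.le_of_ge ⟨hy.1, hyc⟩ hxy) hxy) hy.2
    · exact Or.inr (hyx.trans (c.le_closure x))

end OrderComplex

section Faces

variable {E : Type*} {R : Type*} [CommRing R] {F : Set (Finset E)} {v : E}

/-- The face poset of the simplicial complex `F` restricted to the vertices in `S`. The link of `v`
is the case of `{A | insert v A ∈ F}` and `S.erase v`, the star of `v` that of
`{A | insert v A ∈ F}` and `S`. -/
def nonemptyFaces (S : Finset E) (F : Set (Finset E)) : Set (Finset E) :=
  {A | A ⊆ S ∧ A ∈ F ∧ A.Nonempty}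

lemma isLowerSet_insert_mem (hF : IsLowerSet F) (v : E) : IsLowerSet {A | insert v A ∈ F} :=
  fun _ _ hBA hA => hF (Finset.insert_subset_insert v hBA) hA

lemma nonemptyFaces_erase_of_singleton_notMem (S : Finset E) (hF : IsLowerSet F) (hv : {v} ∉ F) :
    nonemptyFaces (S.erase v) F = nonemptyFaces S F := by
  ext A
  refine and_congr_left fun hA => ?_
  rw [Finset.subset_erase, and_iff_left_iff_imp]
  exact fun _ hvA => hv (hF (Finset.singleton_subset_iff.2 hvA) hA.1)

variable [Fintype E]

lemma orderAcyclic_star {S : Finset E} (hvS : v ∈ S) (hvF : {v} ∈ F) :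
    OrderAcyclic R (nonemptyFaces S {A | insert v A ∈ F}) := by
  let c : ClosureOperator (Finset E) := ClosureOperator.mk' (insert v)
    (fun _ _ h => Finset.insert_subset_insert v h) (Finset.subset_insert v)
    fun A => (Finset.insert_idem v A).le
  refine orderAcyclic_of_closureOperator c (a := {v}) ?_ ?_ ?_
  · rintro A ⟨hAS, hAF, -⟩
    refine ⟨Finset.insert_subset hvS hAS, ?_, Finset.insert_nonempty v A⟩
    rw [Set.mem_ofPred_eq]
    exact (Finset.insert_idem v A).symm ▸ hAF
  · exact ⟨Finset.singleton_subset_iff.2 hvS, by simpa using hvF, Finset.singleton_nonempty v⟩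
  · exact fun A _ => Finset.singleton_subset_iff.2 (Finset.mem_insert_self v A)

lemma orderAcyclic_of_deletion_of_link {S : Finset E} (hF : IsLowerSet F) (hvS : v ∈ S)
    (hvF : {v} ∈ F) (hdel : OrderAcyclic R (nonemptyFaces (S.erase v) F))
    (hlink : OrderAcyclic R (nonemptyFaces (S.erase v) {A | insert v A ∈ F})) :
    OrderAcyclic R (nonemptyFaces S F) := by
  have hsub : ∀ A, insert v A ∈ F → A ∈ F := fun A h => hF (Finset.subset_insert v A) h
  have hunion : nonemptyFaces S F =
      nonemptyFaces (S.erase v) F ∪ nonemptyFaces S {A | insert v A ∈ F} := by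
    ext A
    simp only [nonemptyFaces, Set.mem_union, Set.mem_ofPred_eq, Finset.subset_erase]
    by_cases hvA : v ∈ A
    · simp [hvA]
    · have := hsub A
      tauto
  have hinter : nonemptyFaces (S.erase v) F ∩ nonemptyFaces S {A | insert v A ∈ F} =
      nonemptyFaces (S.erase v) {A | insert v A ∈ F} := by
    ext A
    have := hsub A
    simp only [nonemptyFaces, Set.mem_inter_iff, Set.mem_ofPred_eq, Finset.subset_erase]
    tauto
  rw [hunion]
  refine hdel.union (orderAcyclic_star hvS hvF) (hinter ▸ hlink) ?_
  rintro A ⟨⟨hAS, -, hA⟩, hAstar⟩ B ⟨⟨hBS, hBF, hB⟩, hBdel⟩ hAB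
  have hvB : v ∈ B := by
    by_contra hvB
    exact hBdel ⟨Finset.subset_erase.2 ⟨hBS, hvB⟩, hsub B hBF, hB⟩
  rw [Set.mem_ofPred_eq, Finset.insert_eq_self.2 hvB] at hBF
  refine hAstar ⟨hAS.trans (Finset.erase_subset v S), ?_, hA⟩
  rcases hAB with hAB | hBA
  · exact hF (Finset.insert_subset hvB hAB) hBF
  · exact absurd (hBA hvB) fun hvA => (Finset.mem_erase.1 (hAS hvA)).1 rfl

end Faces

/-- Here `B` collects the variables already answered positively. Answering the root query `v`
negatively leads to the deletion of `v`, answering it positively to the link of `v`. -/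
lemma orderAcyclic_nonemptyFaces_of_decisionTree {E : Type} [Fintype E] {R : Type*} [CommRing R]
    {T : DecisionTree E} {S B : Finset E} {F : Set (Finset E)} (hF : IsLowerSet F) (h0 : ∅ ∈ F)
    (hSB : Disjoint S B)
    (hT : ∀ A ⊆ S, A ∈ F ↔ T.eval (fun e => decide (e ∈ A ∪ B)) = true)
    (hdepth : T.depth < S.card) : OrderAcyclic R (nonemptyFaces S F) := by
  induction T generalizing S B F with
  | leaf b =>
    have hb : b = true := (hT ∅ (Finset.empty_subset S)).1 h0
    exact orderAcyclic_of_comparable (a := S)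
      ⟨subset_rfl, (hT S subset_rfl).2 hb, Finset.card_pos.1 hdepth⟩ fun A hA => Or.inr hA.1
  | node v l r ihl ihr =>
    obtain ⟨hl, hr⟩ : l.depth + 1 < S.card ∧ r.depth + 1 < S.card := by
      rw [DecisionTree.depth] at hdepth
      omega
    simp only [DecisionTree.eval, decide_eq_true_eq, Finset.mem_union] at hT
    by_cases hvS : v ∈ S
    · have hvB : v ∉ B := Finset.disjoint_left.1 hSB hvS
      have hcard := Finset.card_erase_add_one hvS
      have hSvB : Disjoint (S.erase v) B := hSB.mono_left (Finset.erase_subset v S)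
      have hdel : OrderAcyclic R (nonemptyFaces (S.erase v) F) := by
        refine ihr hF h0 hSvB (fun A hA => ?_) (by omega)
        obtain ⟨hAS, hvA⟩ := Finset.subset_erase.1 hA
        simpa [hvA, hvB] using hT A hAS
      by_cases hvF : {v} ∈ F
      · refine orderAcyclic_of_deletion_of_link hF hvS hvF hdel
          (ihl (B := insert v B) (isLowerSet_insert_mem hF v) (by simpa using hvF)
            (Finset.disjoint_insert_right.2 ⟨Finset.notMem_erase v S, hSvB⟩) (fun A hA => ?_)
            (by omega))
        have hAS : insert v A ⊆ S := Finset.insert_subset hvS (Finset.subset_erase.1 hA).1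
        simpa [or_left_comm, or_assoc] using hT _ hAS
      · exact nonemptyFaces_erase_of_singleton_notMem S hF hvF ▸ hdel
    · by_cases hvB : v ∈ B
      · exact ihl hF h0 hSB (fun A hA => by simpa [hvB] using hT A hA) (by omega)
      · refine ihr hF h0 hSB (fun A hA => ?_) (by omega)
        have hvA : v ∉ A := fun h => hvS (hA h)
        simpa [hvA, hvB] using hT A hA

section SmithPair

variable {R M : Type*} [CommRing R] [AddCommGroup M] [Module R M]

/-- The algebraic input of Smith theory. For an automorphism `σ` of order `p` of a complex `C`, the
pair `1 - σ`, `1 + σ + ⋯ + σ ^ (p - 1)`, taken in either order, has these properties with `N` the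
fixed subcomplex; `F` stands for the filtration by degree. -/
structure SmithPair (C N : Submodule R M) (F : ℕ → Submodule R M) (d α β : Module.End R M) :
    Prop where
  commute : Commute α d
  map_mem : ∀ x ∈ C, α x ∈ C
  map_filtration : ∀ k, ∀ x ∈ F k, α x ∈ F k
  mul_eq_zero : β * α = 0
  apply_eq_zero : ∀ x ∈ N, α x = 0
  exists_add : ∀ x ∈ C, β x = 0 → ∃ u ∈ C, ∃ v ∈ N, α u + v = x
  eq_zero_of_mem : ∀ x, α x ∈ N → α x = 0

namespace SmithPair

variable {C N : Submodule R M} {F : ℕ → Submodule R M} {d α β : Module.End R M} {m : ℕ}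

/-- A primitive `c` of the cycle `α u + y` has `d (β c) = 0`, so that `β c` is, by induction on the
degree, the boundary of some `β u₁`; then `β` kills `c - d u₁`, another primitive. -/
lemma exists_boundary (hαβ : SmithPair C N F d α β) (hβα : SmithPair C N F d β α) (hNC : N ≤ C)
    (hdC : ∀ x ∈ C, d x ∈ C) (hdN : ∀ x ∈ N, d x ∈ N) (hdd : ∀ x ∈ C, d (d x) = 0) (hFm : F m = ⊥)
    (hex : ∀ k, ∀ z ∈ C, z ∈ F k → d z = 0 → ∃ c ∈ C, c ∈ F (k + 1) ∧ d c = z)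
    {k : ℕ} (hk : k ≤ m) {u y : M} (hu : u ∈ C) (hy : y ∈ N) (hF : α u + y ∈ F k)
    (hdu : d (α u) = 0) (hdy : d y = 0) :
    (∃ u' ∈ C, d (α u') = α u) ∧ ∃ v ∈ N, d v = y := by
  induction hk using Nat.decreasingInduction generalizing α β u y with
  | self =>
    rw [hFm, Submodule.mem_bot] at hF
    have hαu : α u = 0 := hαβ.eq_zero_of_mem u (eq_neg_of_add_eq_zero_left hF ▸ neg_mem hy)
    rw [hαu, zero_add] at hF
    exact ⟨⟨0, zero_mem C, by simp [hαu]⟩, 0, zero_mem N, by simp [hF]⟩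
  | of_succ k _ ih =>
    have hα (x : M) : α (d x) = d (α x) := LinearMap.congr_fun hαβ.commute.eq x
    have hβ (x : M) : β (d x) = d (β x) := LinearMap.congr_fun hβα.commute.eq x
    obtain ⟨c, hc, hcF, hdc⟩ := hex k _ (add_mem (hαβ.map_mem u hu) (hNC hy)) hF
      (by rw [map_add, hdu, hdy, add_zero])
    have hdβc : d (β c) = 0 := by
      rw [← hβ, hdc, map_add, hβα.apply_eq_zero y hy, add_zero]
      exact LinearMap.congr_fun hαβ.mul_eq_zero u
    obtain ⟨⟨u₁, hu₁, hdu₁⟩, -⟩ := ih hβα hαβ hc (zero_mem N)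
      (by simpa using hβα.map_filtration _ c hcF) hdβc (map_zero d)
    obtain ⟨u₂, hu₂, v₂, hv₂, hsum⟩ := hαβ.exists_add (c - d u₁) (sub_mem hc (hdC _ hu₁))
      (by rw [map_sub, hβ, hdu₁, sub_self])
    have hprim : d (α u₂) + d v₂ = α u + y := by
      rw [← map_add, hsum, map_sub, hdd u₁ hu₁, sub_zero, hdc]
    have hdiff : α (d u₂ - u) = y - d v₂ := by
      rw [map_sub, hα, sub_eq_sub_iff_add_eq_add, hprim, add_comm]
    have hzero := hαβ.eq_zero_of_mem (d u₂ - u) (hdiff ▸ sub_mem hy (hdN v₂ hv₂))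
    refine ⟨⟨u₂, hu₂, ?_⟩, v₂, hv₂, ?_⟩
    · rwa [map_sub, sub_eq_zero, hα] at hzero
    · rw [hzero] at hdiff
      exact (sub_eq_zero.1 hdiff.symm).symm

end SmithPair

end SmithPair

section Translation

variable {T R : Type*} [CommRing R] {p : ℕ} {G : Equiv.Perm T} {S : Set T} {f : T → R}

/-- The operator `f ↦ f ∘ G` on functions. -/
def pullbackEnd (R : Type*) [CommRing R] (G : Equiv.Perm T) : Module.End R (T → R) :=
  LinearMap.funLeft R R G

/-- The operator `1 + σ + ⋯ + σ ^ (p - 1)` where `σ` is `pullbackEnd R G`. -/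
def orbitSum (R : Type*) [CommRing R] (G : Equiv.Perm T) (p : ℕ) : Module.End R (T → R) :=
  ∑ j ∈ Finset.range p, pullbackEnd R G ^ j

lemma pullbackEnd_apply (f : T → R) (t : T) : pullbackEnd R G f t = f (G t) := rfl

lemma pullbackEnd_pow_apply (j : ℕ) (f : T → R) (t : T) :
    (pullbackEnd R G ^ j) f t = f ((G ^ j) t) := by
  induction j generalizing t with
  | zero => rfl
  | succ j ih =>
    rw [pow_succ', Module.End.mul_apply, pullbackEnd_apply, ih, pow_succ, Equiv.Perm.mul_apply]

lemma pullbackEnd_pow_eq_one (hG : G ^ p = 1) : pullbackEnd R G ^ p = 1 := by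
  ext1 f
  ext t
  rw [pullbackEnd_pow_apply, hG]
  rfl

lemma orbitSum_apply (f : T → R) (t : T) :
    orbitSum R G p f t = ∑ j ∈ Finset.range p, f ((G ^ j) t) := by
  simp only [orbitSum, LinearMap.sum_apply, Finset.sum_apply, pullbackEnd_pow_apply]

lemma one_sub_pullbackEnd_mul_orbitSum (hG : G ^ p = 1) :
    (1 - pullbackEnd R G) * orbitSum R G p = 0 := by
  rw [orbitSum, mul_neg_geom_sum, pullbackEnd_pow_eq_one hG, sub_self]

lemma orbitSum_mul_one_sub_pullbackEnd (hG : G ^ p = 1) :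
    orbitSum R G p * (1 - pullbackEnd R G) = 0 := by
  rw [orbitSum, geom_sum_mul_neg, pullbackEnd_pow_eq_one hG, sub_self]

lemma pullbackEnd_mem_supportedOn (hS : G ⁻¹' S = S) (hf : f ∈ supportedOn R S) :
    pullbackEnd R G f ∈ supportedOn R S :=
  fun t ht => hf (G t) fun h => ht (hS ▸ h)

lemma orbitSum_mem {U : Submodule R (T → R)} (hU : ∀ f ∈ U, pullbackEnd R G f ∈ U) (hf : f ∈ U) :
    orbitSum R G p f ∈ U := by
  rw [orbitSum, LinearMap.sum_apply]
  exact sum_mem fun j _ => Module.End.pow_apply_mem_of_forall_mem j hU f hf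

lemma pullbackEnd_eq_self_of_mem (hf : f ∈ supportedOn R {t ∈ S | G t = t}) :
    pullbackEnd R G f = f := by
  ext t
  rw [pullbackEnd_apply]
  by_cases ht : G t = t
  · rw [ht]
  · rw [hf t fun h => ht h.2, hf (G t) fun h => ht (G.injective h.2)]

lemma orbitSum_eq_zero_of_pullbackEnd_eq [CharP R p] (hf : pullbackEnd R G f = f) :
    orbitSum R G p f = 0 := by
  have hpow : ∀ j, (pullbackEnd R G ^ j) f = f := fun j => by
    rw [Module.End.pow_apply, Function.iterate_fixed hf]
  rw [orbitSum, LinearMap.sum_apply, Finset.sum_congr rfl fun j _ => hpow j, Finset.sum_const,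
    Finset.card_range, ← Nat.cast_smul_eq_nsmul R, CharP.cast_eq_zero, zero_smul]

lemma orbitSum_apply_of_fixed [CharP R p] (f : T → R) {t : T} (ht : G t = t) :
    orbitSum R G p f t = 0 := by
  have hpow : ∀ j : ℕ, (G ^ j) t = t := fun j => by
    rw [← Equiv.Perm.iterate_eq_pow, Function.iterate_fixed ht]
  rw [orbitSum_apply, Finset.sum_congr rfl fun j _ => congrArg f (hpow j), Finset.sum_const,
    Finset.card_range, nsmul_eq_mul, CharP.cast_eq_zero, zero_mul]

/-- The function `e` is the indicator function of a choice of one point in every cycle of `G`. -/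
lemma exists_sum_pow_apply_eq_one (R : Type*) [CommRing R] (hp : p.Prime) (hG : G ^ p = 1) :
    ∃ e : T → R, ∀ t, G t ≠ t → ∑ j ∈ Finset.range p, e ((G ^ j) t) = 1 := by
  let rep : T → T := fun t => (Quotient.mk (Equiv.Perm.SameCycle.setoid G) t).out
  have hrep : ∀ t, G.SameCycle t (rep t) := fun t =>
    Quotient.exact (s := Equiv.Perm.SameCycle.setoid G) (Quotient.out_eq _).symm
  have hrep_pow : ∀ (j : ℕ) t, rep ((G ^ j) t) = rep t := fun j t =>
    congrArg Quotient.out (Quotient.sound (s := Equiv.Perm.SameCycle.setoid G)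
      (Equiv.Perm.SameCycle.refl G t).pow_left)
  refine ⟨fun t => if rep t = t then 1 else 0, fun t ht => ?_⟩
  have hperiod : Function.minimalPeriod G t = p := by
    have := Fact.mk hp
    refine Function.minimalPeriod_eq_prime ?_ ht
    rw [Function.IsPeriodicPt, Function.IsFixedPt, Equiv.Perm.iterate_eq_pow, hG,
      Equiv.Perm.one_apply]
  obtain ⟨j, hj, hGj⟩ : ∃ j < p, (G ^ j) t = rep t := by
    obtain ⟨i, hi⟩ := hrep t
    have hp0 : (0 : ℤ) < p := by exact_mod_cast hp.pos
    refine ⟨(i % p).toNat, by have := Int.emod_lt_of_pos i hp0; omega, ?_⟩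
    rw [← zpow_natCast, Int.toNat_of_nonneg (Int.emod_nonneg i hp0.ne'),
      ← zpow_eq_zpow_emod i (by rwa [zpow_natCast]), hi]
  rw [Finset.sum_eq_single_of_mem j (Finset.mem_range.2 hj) fun i hi hij => if_neg fun h => hij ?_]
  · exact if_pos (by rw [hrep_pow, hGj])
  · rw [hrep_pow, ← hGj, ← Equiv.Perm.iterate_eq_pow, ← Equiv.Perm.iterate_eq_pow] at h
    exact (Function.iterate_injOn_Iio_minimalPeriod (hperiod ▸ hj)
      (hperiod ▸ Finset.mem_range.1 hi) h).symm

/-- Multiplication by the indicator function `e` of a fundamental domain is a chain contraction of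
the averaging operator: the identity is the sum of the conjugates of multiplication by `e`. -/
lemma exists_sum_pullbackEnd_pow_mul (R : Type*) [CommRing R] (hp : p.Prime) (hG : G ^ p = 1) :
    ∃ e : T → R, ∀ f : T → R, (∀ t, G t = t → f t = 0) →
      ∑ j ∈ Finset.range p, (pullbackEnd R G ^ j) (e * (pullbackEnd R G ^ (p - j)) f) = f := by
  obtain ⟨e, he⟩ := exists_sum_pow_apply_eq_one R hp hG
  refine ⟨e, fun f hf => funext fun t => ?_⟩
  have hterm : ∀ j ∈ Finset.range p, (pullbackEnd R G ^ j) (e * (pullbackEnd R G ^ (p - j)) f) t =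
      e ((G ^ j) t) * f t := by
    intro j hj
    rw [pullbackEnd_pow_apply, Pi.mul_apply, pullbackEnd_pow_apply, ← Equiv.Perm.mul_apply,
      ← pow_add, Nat.sub_add_cancel (Finset.mem_range.1 hj).le, hG, Equiv.Perm.one_apply]
  rw [Finset.sum_apply, Finset.sum_congr rfl hterm, ← Finset.sum_mul]
  by_cases ht : G t = t
  · rw [hf t ht, mul_zero]
  · rw [he t ht, one_mul]

lemma mul_mem_supportedOn (e : T → R) (hf : f ∈ supportedOn R S) : e * f ∈ supportedOn R S :=
  fun t ht => by rw [Pi.mul_apply, hf t ht, mul_zero]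

variable (hp : p.Prime) (hG : G ^ p = 1) (hS : G ⁻¹' S = S) (hf : f ∈ supportedOn R S)
  (hfix : ∀ t, G t = t → f t = 0)

include hp hG hf hfix

lemma exists_orbitSum_eq (h : (1 - pullbackEnd R G) f = 0) :
    ∃ u ∈ supportedOn R S, orbitSum R G p u = f := by
  obtain ⟨e, he⟩ := exists_sum_pullbackEnd_pow_mul R hp hG
  have hpow : ∀ j, (pullbackEnd R G ^ j) f = f := fun j => by
    rw [Module.End.pow_apply, Function.iterate_fixed (sub_eq_zero.1 h).symm]
  refine ⟨e * f, mul_mem_supportedOn e hf, ?_⟩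
  simpa only [orbitSum, LinearMap.sum_apply, hpow] using he f hfix

include hS

lemma exists_one_sub_pullbackEnd_eq (h : orbitSum R G p f = 0) :
    ∃ u ∈ supportedOn R S, (1 - pullbackEnd R G) u = f := by
  obtain ⟨e, he⟩ := exists_sum_pullbackEnd_pow_mul R hp hG
  have hσ : ∀ g ∈ supportedOn R S, pullbackEnd R G g ∈ supportedOn R S := fun g =>
    pullbackEnd_mem_supportedOn hS
  have hzero : ∑ j ∈ Finset.range p, e * (pullbackEnd R G ^ (p - j)) f = 0 := by
    have hshift : ∑ j ∈ Finset.range p, (pullbackEnd R G ^ (p - j)) f =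
        pullbackEnd R G (orbitSum R G p f) := by
      rw [orbitSum, LinearMap.sum_apply, map_sum, ← Finset.sum_range_reflect]
      refine Finset.sum_congr rfl fun j hj => ?_
      rw [← Module.End.mul_apply, ← pow_succ']
      congr 2
      have := Finset.mem_range.1 hj
      omega
    rw [← Finset.mul_sum, hshift, h, map_zero, mul_zero]
  refine ⟨-∑ j ∈ Finset.range p, (∑ i ∈ Finset.range j, pullbackEnd R G ^ i)
    (e * (pullbackEnd R G ^ (p - j)) f), ?_, ?_⟩
  · refine neg_mem (sum_mem fun j _ => orbitSum_mem hσ (mul_mem_supportedOn e ?_))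
    exact Module.End.pow_apply_mem_of_forall_mem _ hσ f hf
  · have hgeom : ∀ j (x : T → R), (1 - pullbackEnd R G)
        ((∑ i ∈ Finset.range j, pullbackEnd R G ^ i) x) =
          x - (pullbackEnd R G ^ j) x := fun j x => by
      rw [← Module.End.mul_apply, mul_neg_geom_sum, LinearMap.sub_apply, Module.End.one_apply]
    rw [map_neg, map_sum, Finset.sum_congr rfl fun j _ => hgeom j _, Finset.sum_sub_distrib, hzero,
      he f hfix, zero_sub, neg_neg]

end Translation

section OrderIso

variable {V W : Type*} [PartialOrder V] [PartialOrder W] {R : Type*} [CommRing R]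

lemma incidenceSign_map (e : V ≃o W) (x : V) (t : Finset V) :
    incidenceSign R (e x) (t.map e.toEquiv.toEmbedding) = incidenceSign R x t := by
  rw [incidenceSign, incidenceSign, Finset.filter_map, Finset.card_map]
  congr 3
  ext y
  simp

lemma map_mem_orderComplex_iff (e : V ≃o W) {X : Set W} {t : Finset V} :
    t.map e.toEquiv.toEmbedding ∈ orderComplex X ↔ t ∈ orderComplex (e ⁻¹' X) := by
  refine and_congr (by simp) ?_
  simp [IsChain, Set.Pairwise]

/-- The action of the order automorphisms of `V` on the finite subsets of `V`. -/
def finsetPerm : (V ≃o V) →* Equiv.Perm (Finset V) where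
  toFun g := g.toEquiv.finsetCongr
  map_one' := Equiv.ext fun _ => Finset.map_refl
  map_mul' g h := Equiv.ext fun t =>
    (Finset.map_map h.toEquiv.toEmbedding g.toEquiv.toEmbedding t).symm

lemma finsetPerm_apply (g : V ≃o V) (t : Finset V) :
    finsetPerm g t = t.map g.toEquiv.toEmbedding := rfl

lemma card_finsetPerm (g : V ≃o V) (t : Finset V) : (finsetPerm g t).card = t.card :=
  Finset.card_map _

lemma preimage_finsetPerm_orderComplex {g : V ≃o V} {X : Set V} (hgX : g ⁻¹' X = X) :
    finsetPerm g ⁻¹' orderComplex X = orderComplex X := by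
  ext t
  rw [Set.mem_preimage, finsetPerm_apply, map_mem_orderComplex_iff, hgX]

section Finite

variable [Finite V]

lemma orderIso_apply_eq_of_le_apply (g : V ≃o V) {x : V} (h : x ≤ g x) : g x = x := by
  obtain ⟨n, hn, hx⟩ := Function.mem_periodicPts.1 (g.injective.mem_periodicPts x)
  have hle : g^[1] x ≤ g^[n] x := g.monotone.monotone_iterate_of_le_map h (Nat.succ_le_of_lt hn)
  exact le_antisymm (hle.trans hx.le) h

lemma finsetPerm_eq_self_iff (g : V ≃o V) {t : Finset V} (ht : IsChain (· ≤ ·) (t : Set V)) :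
    finsetPerm g t = t ↔ ∀ x ∈ t, g x = x := by
  rw [finsetPerm_apply]
  constructor
  · intro h x hx
    have hgx : g x ∈ t := h ▸ Finset.mem_map_of_mem _ hx
    rcases ht.total hx hgx with hle | hle
    · exact orderIso_apply_eq_of_le_apply g hle
    · have hsymm := orderIso_apply_eq_of_le_apply g.symm (x := g x) (by simpa using hle)
      simpa using hsymm.symm
  · intro h
    refine Finset.eq_of_subset_of_card_le (fun y hy => ?_) (Finset.card_map _).ge
    obtain ⟨x, hx, rfl⟩ := Finset.mem_map.1 hy
    exact (h x hx).symm ▸ hx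

lemma orderComplex_fixedPoints (g : V ≃o V) (X : Set V) :
    orderComplex {x ∈ X | g x = x} = {t ∈ orderComplex X | finsetPerm g t = t} := by
  ext t
  constructor
  · rintro ⟨hX, hchain⟩
    exact ⟨⟨fun x hx => (hX hx).1, hchain⟩,
      (finsetPerm_eq_self_iff g hchain).2 fun x hx => (hX hx).2⟩
  · rintro ⟨⟨hX, hchain⟩, ht⟩
    exact ⟨fun x hx => ⟨hX hx, (finsetPerm_eq_self_iff g hchain).1 ht x hx⟩, hchain⟩

end Finite

variable [Fintype V] [Fintype W]

lemma chainBoundary_comp_map (e : V ≃o W) (f : Finset W → R) :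
    chainBoundary R V (fun t => f (t.map e.toEquiv.toEmbedding)) =
      fun t => chainBoundary R W f (t.map e.toEquiv.toEmbedding) := by
  ext t
  rw [chainBoundary_apply, chainBoundary_apply]
  refine Finset.sum_equiv e.toEquiv (fun x => by simp) fun x _ => ?_
  rw [Finset.map_insert, ← incidenceSign_map e x t]
  rfl

lemma OrderAcyclic.preimage (e : V ≃o W) {X : Set W} (h : OrderAcyclic R X) :
    OrderAcyclic R (e ⁻¹' X) := by
  have hes : ∀ t : Finset V, (t.map e.toEquiv.toEmbedding).map e.symm.toEquiv.toEmbedding = t :=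
    e.toEquiv.finsetCongr.symm_apply_apply
  have hse : ∀ t : Finset W, (t.map e.symm.toEquiv.toEmbedding).map e.toEquiv.toEmbedding = t :=
    e.toEquiv.finsetCongr.apply_symm_apply
  intro f hf hdf
  obtain ⟨u, hu, hdu⟩ := h (fun t => f (t.map e.symm.toEquiv.toEmbedding))
    (fun t ht => hf _ fun hmem => ht (by rwa [← map_mem_orderComplex_iff, hse] at hmem))
    (by rw [chainBoundary_comp_map, hdf]; rfl)
  refine ⟨fun t => u (t.map e.toEquiv.toEmbedding), fun t ht => hu _ fun hmem =>
    ht ((map_mem_orderComplex_iff e).1 hmem), ?_⟩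
  rw [chainBoundary_comp_map, hdu]
  exact funext fun t => congrArg f (hes t)

lemma commute_pullbackEnd_chainBoundary (g : V ≃o V) :
    Commute (pullbackEnd R (finsetPerm g)) (chainBoundary R V) :=
  LinearMap.ext fun f => (chainBoundary_comp_map g f).symm

/-- The boundary map is homogeneous, so primitives can be truncated. -/
lemma OrderAcyclic.exists_boundary_card_le {X : Set V} (h : OrderAcyclic R X) (k : ℕ)
    {f : Finset V → R} (hf : f ∈ supportedOn R (orderComplex X))
    (hfk : f ∈ supportedOn R {t : Finset V | k ≤ t.card}) (hdf : chainBoundary R V f = 0) :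
    ∃ c ∈ supportedOn R (orderComplex X), c ∈ supportedOn R {t : Finset V | k + 1 ≤ t.card} ∧
      chainBoundary R V c = f := by
  obtain ⟨c, hc, hdc⟩ := h f hf hdf
  refine ⟨{t : Finset V | k + 1 ≤ t.card}.indicator c,
    fun t ht => Set.indicator_apply_eq_zero.2 fun _ => hc t ht,
    fun t ht => Set.indicator_of_notMem ht c, funext fun t => ?_⟩
  have hcard : ∀ x ∈ tᶜ, (insert x t).card = t.card + 1 := fun x hx =>
    Finset.card_insert_of_notMem (Finset.mem_compl.1 hx)
  rw [chainBoundary_apply]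
  by_cases ht : k ≤ t.card
  · rw [← hdc, chainBoundary_apply]
    refine Finset.sum_congr rfl fun x hx => ?_
    rw [Set.indicator_of_mem (by rw [Set.mem_ofPred_eq, hcard x hx]; omega)]
  · rw [hfk t ht]
    refine Finset.sum_eq_zero fun x hx => ?_
    rw [Set.indicator_of_notMem (by rw [Set.mem_ofPred_eq, hcard x hx]; omega), mul_zero]

end OrderIso

section Smith

variable {T : Type*} {R : Type*} [CommRing R] {p : ℕ} [CharP R p] {G : Equiv.Perm T} {S : Set T}

lemma exists_apply_add_eq {α β : Module.End R (T → R)}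
    (hβ : ∀ v ∈ supportedOn R {t ∈ S | G t = t}, β v = 0)
    (hα : ∀ f ∈ supportedOn R S, (∀ t, G t = t → f t = 0) → β f = 0 →
      ∃ u ∈ supportedOn R S, α u = f)
    {f : T → R} (hf : f ∈ supportedOn R S) (hβf : β f = 0) :
    ∃ u ∈ supportedOn R S, ∃ v ∈ supportedOn R {t ∈ S | G t = t}, α u + v = f := by
  set v : T → R := {t | G t = t}.indicator f
  have hv : v ∈ supportedOn R {t ∈ S | G t = t} := fun t ht =>
    Set.indicator_apply_eq_zero.2 fun hGt => hf t fun htS => ht ⟨htS, hGt⟩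
  obtain ⟨u, hu, hαu⟩ := hα (f - v) (sub_mem hf (supportedOn_mono (fun _ ht => ht.1) hv))
    (fun t ht => sub_eq_zero.2 (Set.indicator_of_mem ht f).symm)
    (by rw [map_sub, hβf, hβ v hv, sub_zero])
  exact ⟨u, hu, v, hv, by rw [hαu, sub_add_cancel]⟩

lemma eq_zero_of_mem_supportedOn_fixed {f : T → R} (hf : f ∈ supportedOn R {t ∈ S | G t = t})
    (hfix : ∀ t, G t = t → f t = 0) : f = 0 := by
  ext t
  by_cases ht : G t = t
  · exact hfix t ht
  · exact hf t fun h => ht h.2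

variable {F : ℕ → Submodule R (T → R)} {d : Module.End R (T → R)} (hp : p.Prime) (hG : G ^ p = 1)
  (hS : G ⁻¹' S = S) (hd : Commute (pullbackEnd R G) d)
  (hF : ∀ k, ∀ f ∈ F k, pullbackEnd R G f ∈ F k)

include hp hG hS hd hF

lemma smithPair_one_sub_pullbackEnd_orbitSum :
    SmithPair (supportedOn R S) (supportedOn R {t ∈ S | G t = t}) F d
      (1 - pullbackEnd R G) (orbitSum R G p) where
  commute := (Commute.one_left d).sub_left hd
  map_mem _ hf := sub_mem hf (pullbackEnd_mem_supportedOn hS hf)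
  map_filtration k f hf := sub_mem hf (hF k f hf)
  mul_eq_zero := orbitSum_mul_one_sub_pullbackEnd hG
  apply_eq_zero _ hf := sub_eq_zero.2 (pullbackEnd_eq_self_of_mem hf).symm
  exists_add _ := exists_apply_add_eq
    (fun _ hv => orbitSum_eq_zero_of_pullbackEnd_eq (pullbackEnd_eq_self_of_mem hv))
    fun _ hf hfix => exists_one_sub_pullbackEnd_eq hp hG hS hf hfix
  eq_zero_of_mem f hf := eq_zero_of_mem_supportedOn_fixed hf fun _ ht =>
    sub_eq_zero.2 (congrArg f ht).symm

lemma smithPair_orbitSum_one_sub_pullbackEnd :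
    SmithPair (supportedOn R S) (supportedOn R {t ∈ S | G t = t}) F d
      (orbitSum R G p) (1 - pullbackEnd R G) where
  commute := Commute.sum_left _ _ _ fun j _ => hd.pow_left j
  map_mem _ := orbitSum_mem fun _ => pullbackEnd_mem_supportedOn hS
  map_filtration k _ := orbitSum_mem (hF k)
  mul_eq_zero := one_sub_pullbackEnd_mul_orbitSum hG
  apply_eq_zero _ hf := orbitSum_eq_zero_of_pullbackEnd_eq (pullbackEnd_eq_self_of_mem hf)
  exists_add _ := exists_apply_add_eq
    (fun _ hv => sub_eq_zero.2 (pullbackEnd_eq_self_of_mem hv).symm)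
    fun _ hf hfix => exists_orbitSum_eq hp hG hf hfix
  eq_zero_of_mem f hf := eq_zero_of_mem_supportedOn_fixed hf fun _ =>
    orbitSum_apply_of_fixed f

end Smith

theorem OrderAcyclic.fixed {V : Type*} [PartialOrder V] [Fintype V] {R : Type*} [CommRing R] {p : ℕ}
    [CharP R p] (hp : p.Prime) {g : V ≃o V} (hg : g ^ p = 1) {X : Set V} (hgX : g ⁻¹' X = X)
    (h : OrderAcyclic R X) : OrderAcyclic R {x ∈ X | g x = x} := by
  have hG : finsetPerm g ^ p = 1 := by rw [← map_pow, hg, map_one]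
  have hS := preimage_finsetPerm_orderComplex hgX
  have hd := commute_pullbackEnd_chainBoundary (R := R) g
  have hdeg : ∀ k : ℕ, finsetPerm g ⁻¹' {t | k ≤ t.card} = {t | k ≤ t.card} := fun k => by
    ext t
    rw [Set.mem_preimage, Set.mem_ofPred_eq, card_finsetPerm, Set.mem_ofPred_eq]
  have hF : ∀ k : ℕ, ∀ f ∈ supportedOn R {t : Finset V | k ≤ t.card},
      pullbackEnd R (finsetPerm g) f ∈ supportedOn R {t : Finset V | k ≤ t.card} := fun k _ =>
    pullbackEnd_mem_supportedOn (hdeg k)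
  have htop : supportedOn R {t : Finset V | Fintype.card V + 1 ≤ t.card} = ⊥ :=
    eq_bot_iff.2 fun f hf => funext fun t => hf t (Nat.not_le.2 (Nat.lt_succ_of_le t.card_le_univ))
  intro f hf hdf
  have hfix := orderComplex_fixedPoints g X
  refine ((smithPair_one_sub_pullbackEnd_orbitSum hp hG hS hd hF).exists_boundary
    (smithPair_orbitSum_one_sub_pullbackEnd hp hG hS hd hF)
    (u := 0) (y := f) (supportedOn_mono fun _ ht => ht.1) (fun _ => chainBoundary_mem)
    (fun _ hy => ?_) (fun _ => chainBoundary_chainBoundary) htop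
    (fun k _ => h.exists_boundary_card_le k) (Nat.zero_le _) (zero_mem _) (hfix ▸ hf)
    (fun t ht => absurd (Nat.zero_le t.card) ht) (by simp) hdf).2.imp fun v hv => ?_
  · rw [← hfix] at hy ⊢
    exact chainBoundary_mem hy
  · rwa [hfix]

section RationalAcyclicity

lemma exists_smul_mem_of_forall_exists_sub_smul_mem {R M : Type*} [CommRing R]
    [AddCommGroup M] [Module R M] {Z B : Submodule R M} (hZ : Z.FG) {a : R} (ha : ¬ IsUnit a)
    (h : ∀ z ∈ Z, ∃ w ∈ Z, z - a • w ∈ B) : ∃ r ≠ (0 : R), ∀ z ∈ Z, r • z ∈ B := by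
  have hle : Z.map B.mkQ ≤ Ideal.span {a} • Z.map B.mkQ := by
    rintro _ ⟨z, hz, rfl⟩
    obtain ⟨w, hw, hzw⟩ := h z hz
    rw [show B.mkQ z = a • B.mkQ w from (Submodule.Quotient.eq B).2 hzw]
    exact Submodule.smul_mem_smul (Ideal.mem_span_singleton_self a) ⟨w, hw, rfl⟩
  obtain ⟨r, hr, hrZ⟩ := Submodule.exists_sub_one_mem_and_smul_eq_zero_of_fg_of_le_smul
    (Ideal.span {a}) (Z.map B.mkQ) (hZ.map B.mkQ) hle
  refine ⟨r, ?_, fun z hz => (Submodule.Quotient.mk_eq_zero B).1 (hrZ _ ⟨z, hz, rfl⟩)⟩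
  rintro rfl
  rw [zero_sub, neg_mem_iff, Ideal.mem_span_singleton] at hr
  exact ha (isUnit_of_dvd_one hr)

lemma exists_int_eq_mul_of_finite {T : Type*} [Finite T] (f : T → ℚ) :
    ∃ b ≠ (0 : ℤ), ∃ z : T → ℤ, ∀ t, (z t : ℚ) = b * f t := by
  obtain ⟨b, hb⟩ := IsLocalization.exist_integer_multiples_of_finite (nonZeroDivisors ℤ) f
  choose z hz using hb
  exact ⟨b, nonZeroDivisors.coe_ne_zero b, z, fun t => by simpa using hz t⟩

variable {V : Type*} [Fintype V] [PartialOrder V] {X : Set V} {p : ℕ}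

lemma chainBoundary_comp_ringHom {R S : Type*} [CommRing R] [CommRing S] (φ : R →+* S)
    (f : Finset V → R) : chainBoundary S V (φ ∘ f) = φ ∘ chainBoundary R V f := by
  ext t
  simp [chainBoundary_apply, incidenceSign]

lemma OrderAcyclic.exists_sub_chainBoundary_eq_smul (hp : p ≠ 0) (h : OrderAcyclic (ZMod p) X)
    {z : Finset V → ℤ} (hz : z ∈ supportedOn ℤ (orderComplex X)) (hdz : chainBoundary ℤ V z = 0) :
    ∃ c ∈ supportedOn ℤ (orderComplex X), ∃ w ∈ supportedOn ℤ (orderComplex X),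
      chainBoundary ℤ V w = 0 ∧ z - chainBoundary ℤ V c = (p : ℤ) • w := by
  have hp0 : (p : ℤ) ≠ 0 := Nat.cast_ne_zero.2 hp
  obtain ⟨c, hc, hdc⟩ := h (Int.castRingHom (ZMod p) ∘ z) (fun t ht => by simp [hz t ht])
    (by rw [chainBoundary_comp_ringHom, hdz]; ext; simp)
  let l : Finset V → ℤ := fun t => (c t).cast
  have hl : l ∈ supportedOn ℤ (orderComplex X) := fun t ht => by simp [l, hc t ht]
  have hlc : Int.castRingHom (ZMod p) ∘ l = c := funext fun t => ZMod.intCast_zmod_cast (c t)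
  have hdvd : ∀ t, (p : ℤ) ∣ z t - chainBoundary ℤ V l t := fun t => by
    rw [← hlc, chainBoundary_comp_ringHom] at hdc
    rw [← ZMod.intCast_zmod_eq_zero_iff_dvd, Int.cast_sub, sub_eq_zero]
    exact (congrFun hdc t).symm
  choose w hw using hdvd
  have hzw : z - chainBoundary ℤ V l = (p : ℤ) • w := funext hw
  have hpw : (p : ℤ) • w ∈ supportedOn ℤ (orderComplex X) :=
    hzw ▸ sub_mem hz (chainBoundary_mem hl)
  refine ⟨l, hl, w, fun t ht => (mul_eq_zero.1 (hpw t ht)).resolve_left hp0, ?_, hzw⟩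
  refine (smul_eq_zero.1 ?_).resolve_left hp0
  rw [← map_smul, ← hzw, map_sub, hdz, chainBoundary_chainBoundary hl, sub_zero]

lemma OrderAcyclic.exists_smul_eq_chainBoundary (hp : 1 < p) (h : OrderAcyclic (ZMod p) X) :
    ∃ r ≠ (0 : ℤ), ∀ z ∈ supportedOn ℤ (orderComplex X), chainBoundary ℤ V z = 0 →
      ∃ c ∈ supportedOn ℤ (orderComplex X), chainBoundary ℤ V c = r • z := by
  have hp1 : ¬ IsUnit (p : ℤ) := by
    rw [Int.isUnit_iff]
    omega
  obtain ⟨r, hr, hrZ⟩ := exists_smul_mem_of_forall_exists_sub_smul_mem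
    (B := (supportedOn ℤ (orderComplex X)).map (chainBoundary ℤ V))
    (IsNoetherian.noetherian (supportedOn ℤ (orderComplex X) ⊓ LinearMap.ker (chainBoundary ℤ V)))
    hp1 fun z hz => by
      obtain ⟨c, hc, w, hw, hdw, hzw⟩ := h.exists_sub_chainBoundary_eq_smul (by omega) hz.1 hz.2
      exact ⟨w, ⟨hw, hdw⟩, c, hc, by rw [← hzw, sub_sub_cancel]⟩
  exact ⟨r, hr, fun z hz hdz => hrZ z ⟨hz, hdz⟩⟩

theorem OrderAcyclic.rat (hp : 1 < p) (h : OrderAcyclic (ZMod p) X) : OrderAcyclic ℚ X := by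
  intro f hf hdf
  obtain ⟨r, hr, hex⟩ := h.exists_smul_eq_chainBoundary hp
  obtain ⟨b, hb, z, hz⟩ := exists_int_eq_mul_of_finite f
  have hb' : (b : ℚ) ≠ 0 := Int.cast_ne_zero.2 hb
  have hr' : (r : ℚ) ≠ 0 := Int.cast_ne_zero.2 hr
  have hzf : Int.castRingHom ℚ ∘ z = (b : ℚ) • f := funext hz
  obtain ⟨c, hc, hdc⟩ := hex z
    (fun t ht => Int.cast_eq_zero.1 ((hz t).trans (by rw [hf t ht, mul_zero])))
    (funext fun t => by
      have hdz := chainBoundary_comp_ringHom (Int.castRingHom ℚ) z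
      rw [hzf, map_smul, hdf, smul_zero] at hdz
      exact Int.cast_eq_zero.1 (congrFun hdz t).symm)
  refine ⟨((r : ℚ) * b)⁻¹ • (Int.castRingHom ℚ ∘ c),
    Submodule.smul_mem _ _ fun t ht => by simp [hc t ht], ?_⟩
  rw [map_smul, chainBoundary_comp_ringHom, hdc, inv_smul_eq_iff₀ (mul_ne_zero hr' hb'), mul_smul,
    ← hzf]
  ext t
  simp

end RationalAcyclicity

section Lefschetz

/-- A pseudo-inverse `s` of `D` splits the identity as `s * D + D * s - D * s * s * D`, and each
summand contributes to the trace of `A` a commutator up to sign. -/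
lemma trace_eq_zero_of_ker_le_range {F M : Type*} [Field F] [AddCommGroup M] [Module F M]
    {D A : Module.End F M} (hDD : D * D = 0) (hex : LinearMap.ker D ≤ LinearMap.range D)
    (hDA : D * A = -(A * D)) : LinearMap.trace F M A = 0 := by
  obtain ⟨g, hg⟩ := D.rangeRestrict.exists_rightInverse_of_surjective D.range_rangeRestrict
  obtain ⟨s, hs⟩ := LinearMap.exists_extend g
  have hDs : ∀ x ∈ LinearMap.range D, D (s x) = x := fun x hx => by
    have hgx : s x = g ⟨x, hx⟩ := LinearMap.congr_fun hs ⟨x, hx⟩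
    rw [hgx]
    exact congrArg Subtype.val (LinearMap.congr_fun hg ⟨x, hx⟩)
  have hsplit : A = A * s * D + A * D * s - A * D * s * s * D := by
    ext x
    have hker : x - s (D x) ∈ LinearMap.ker D := by
      rw [LinearMap.mem_ker, map_sub, hDs _ (LinearMap.mem_range_self D x), sub_self]
    have hx := congrArg A (hDs _ (hex hker))
    simp only [map_sub] at hx
    simp only [LinearMap.sub_apply, LinearMap.add_apply, Module.End.mul_apply]
    rw [← sub_eq_zero] at hx ⊢
    rw [← neg_eq_zero, ← hx]
    abel
  have hcomm : LinearMap.trace F M (A * s * D) = -LinearMap.trace F M (A * D * s) := by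
    rw [LinearMap.trace_mul_comm, ← mul_assoc, hDA, neg_mul, map_neg]
  have hzero : LinearMap.trace F M (A * D * s * s * D) = 0 := by
    rw [LinearMap.trace_mul_comm, ← mul_assoc, ← mul_assoc, ← mul_assoc, hDA, neg_mul,
      mul_assoc A, hDD, mul_zero, neg_zero, zero_mul, zero_mul, map_zero]
  rw [hsplit, map_sub, map_add, hcomm, hzero, neg_add_cancel, sub_zero]

lemma trace_pi_smul_proj {F T : Type*} [CommRing F] [Fintype T] (a : T → F) (G : T → T) :
    LinearMap.trace F (T → F) (LinearMap.pi fun t => a t • LinearMap.proj (G t)) =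
      ∑ t, if G t = t then a t else 0 := by
  rw [LinearMap.trace_eq_matrix_trace F (Pi.basisFun F T), Matrix.trace]
  refine Finset.sum_congr rfl fun t _ => ?_
  simp [Pi.single_apply]

variable {V : Type*} [Fintype V] [PartialOrder V] {X : Set V}

/-- The Hopf trace formula. Since the sign `(-1) ^ t.card` makes the action of `g` anticommute with
the boundary map, its trace on an acyclic complex vanishes. -/
theorem OrderAcyclic.sum_neg_one_pow_card_eq_zero {F : Type*} [Field F] (h : OrderAcyclic F X)
    {g : V ≃o V} (hgX : g ⁻¹' X = X) :
    ∑ t : orderComplex {x ∈ X | g x = x}, (-1 : F) ^ (t : Finset V).card = 0 := by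
  let C := supportedOn F (orderComplex X)
  let A : Module.End F (Finset V → F) := LinearMap.pi fun t =>
    (if t ∈ orderComplex X then (-1 : F) ^ t.card else 0) • LinearMap.proj (finsetPerm g t)
  have hA : ∀ f ∈ C, ∀ t, A f t = (-1) ^ t.card * f (finsetPerm g t) := fun f hf t => by
    by_cases ht : t ∈ orderComplex X
    · simp [A, ht]
    · have hgt : finsetPerm g t ∉ orderComplex X := fun hmem =>
        ht (preimage_finsetPerm_orderComplex hgX ▸ hmem)
      simp [A, ht, hf _ hgt]
  have hAC : ∀ f, A f ∈ C := fun f t ht => by simp [A, ht]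
  have hdC : ∀ f ∈ C, chainBoundary F V f ∈ C := fun f => chainBoundary_mem
  have htrace := trace_eq_zero_of_ker_le_range (D := (chainBoundary F V).restrict hdC)
    (A := A.restrict fun f _ => hAC f)
    (LinearMap.ext fun f => Subtype.ext (chainBoundary_chainBoundary f.2))
    (fun f hf => by
      obtain ⟨u, hu, hdu⟩ := h f f.2 (congrArg Subtype.val hf)
      exact ⟨⟨u, hu⟩, Subtype.ext hdu⟩)
    (LinearMap.ext fun f => Subtype.ext (funext fun t => by
      change chainBoundary F V (A f) t = -A (chainBoundary F V f) t
      rw [hA _ (hdC f f.2), finsetPerm_apply, ← congrFun (chainBoundary_comp_map g f.1) t,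
        chainBoundary_apply, chainBoundary_apply, Finset.mul_sum, ← Finset.sum_neg_distrib]
      refine Finset.sum_congr rfl fun x hx => ?_
      rw [hA f f.2, Finset.card_insert_of_notMem (Finset.mem_compl.1 hx), finsetPerm_apply]
      ring))
  rw [LinearMap.trace_restrict_eq_of_forall_mem C A hAC, trace_pi_smul_proj] at htrace
  rw [← htrace, ← Finset.sum_subtype
    (Finset.univ.filter (· ∈ orderComplex {x ∈ X | g x = x})) (by simp) fun t => (-1 : F) ^ t.card,
    Finset.sum_filter, orderComplex_fixedPoints]
  refine Finset.sum_congr rfl fun t _ => ?_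
  simp only [Set.mem_ofPred_eq, and_comm (a := t ∈ orderComplex X), ite_and]
  split_ifs <;> rfl

theorem OrderAcyclic.even_card_orderComplex_fixedPoints (h : OrderAcyclic ℚ X) {g : V ≃o V}
    (hgX : g ⁻¹' X = X) : Even (Fintype.card (orderComplex {x ∈ X | g x = x})) := by
  have hsum : ∑ t : orderComplex {x ∈ X | g x = x}, (-1 : ℤ) ^ (t : Finset V).card = 0 := by
    exact_mod_cast h.sum_neg_one_pow_card_eq_zero hgX
  have hmod := congrArg (Int.cast : ℤ → ZMod 2) hsum
  simp only [Int.cast_sum, Int.cast_pow, Int.cast_neg, Int.cast_one, CharTwo.neg_eq, one_pow,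
    Finset.sum_const, nsmul_eq_mul, mul_one, Int.cast_zero] at hmod
  exact (ZMod.natCast_eq_zero_iff_even).1 hmod

end Lefschetz

section Oliver

variable {V : Type*} [Fintype V] [PartialOrder V] {X : Set V} {p : ℕ}

lemma preimage_fixedPoints_of_mem_normalizer {V : Type*} [PartialOrder V] {X : Set V}
    {S : Set (V ≃o V)} {g : V ≃o V} (hg : g ∈ Subgroup.normalizer S) (hgX : g ⁻¹' X = X) :
    g ⁻¹' {x ∈ X | ∀ s ∈ S, s x = x} = {x ∈ X | ∀ s ∈ S, s x = x} := by
  ext x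
  refine and_congr (Set.ext_iff.1 hgX x) ⟨fun h s hs => g.injective ?_, fun h s hs => ?_⟩
  · simpa using h (g * s * g⁻¹) ((hg s).1 hs)
  · simpa using congrArg g (h (g⁻¹ * s * g) ((Subgroup.mem_set_normalizer_iff''.1 hg s).1 hs))

lemma OrderAcyclic.fixed_of_commute {R : Type*} [CommRing R] [CharP R p] (hp : p.Prime)
    (h : OrderAcyclic R X) {S : Set (V ≃o V)} (hcomm : ∀ s ∈ S, ∀ t ∈ S, Commute s t)
    (hpow : ∀ s ∈ S, s ^ p = 1) (hX : ∀ s ∈ S, s ⁻¹' X = X) :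
    OrderAcyclic R {x ∈ X | ∀ s ∈ S, s x = x} := by
  have := DFunLike.finite (V ≃o V)
  refine Set.Finite.induction_on_subset (motive := fun S' _ =>
    OrderAcyclic R {x ∈ X | ∀ s ∈ S', s x = x}) S S.toFinite (by simpa using h)
    fun {s S'} hs hS' _ ih => ?_
  have hnorm : s ∈ Subgroup.normalizer S' := Subgroup.centralizer_le_normalizer S'
    fun t ht => hcomm t (hS' ht) s hs
  have hfixed := ih.fixed hp (hpow s hs) (preimage_fixedPoints_of_mem_normalizer hnorm (hX s hs))
  convert hfixed using 1
  ext x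
  simp only [Set.mem_ofPred_eq, Set.forall_mem_insert]
  tauto

lemma exists_mem_apply_eq_of_dvd_card_orderComplex {Y : Set V} {q b : ℕ} (hq : q.Prime)
    {u : V ≃o V} (hu : u ^ q ^ b = 1) (hY : u ⁻¹' Y = Y)
    (hcard : q ∣ Fintype.card (orderComplex Y)) : ∃ y ∈ Y, u y = y := by
  have := Fact.mk hq
  have hmem : ∀ t, finsetPerm u t ∈ orderComplex Y ↔ t ∈ orderComplex Y := fun t =>
    Set.ext_iff.1 (preimage_finsetPerm_orderComplex hY) t
  have hpow : (finsetPerm u).subtypePerm hmem ^ q ^ b = 1 := by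
    have hfin : finsetPerm u ^ q ^ b = 1 := by rw [← map_pow, hu, map_one]
    simp only [Equiv.Perm.subtypePerm_pow, hfin]
    exact Equiv.Perm.subtypePerm_one _ fun _ => Iff.rfl
  obtain ⟨⟨t, ht⟩, htu, hne⟩ := Equiv.Perm.exists_fixed_point_of_prime' hcard hpow
    (a := ⟨∅, by simp [orderComplex]⟩) (Subtype.ext (by simp [finsetPerm_apply]))
  obtain ⟨y, hy⟩ : t.Nonempty := Finset.nonempty_iff_ne_empty.2 fun h => hne (Subtype.ext h)
  exact ⟨y, ht.1 hy, (finsetPerm_eq_self_iff u ht.2).1 (congrArg Subtype.val htu) y hy⟩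

/-- Oliver's fixed point theorem, with the elementary abelian group `T` as the `p`-subgroup. -/
theorem OrderAcyclic.exists_le_stabilizer (hp : p.Prime) (h : OrderAcyclic (ZMod p) X)
    {T : Subgroup (V ≃o V)} (hcomm : ∀ s ∈ T, ∀ t ∈ T, Commute s t) (hpow : ∀ t ∈ T, t ^ p = 1)
    {g u : V ≃o V} (hg : g ∈ Subgroup.normalizer (T : Set (V ≃o V)))
    (hu : u ∈ Subgroup.normalizer ((T ⊔ .zpowers g : Subgroup (V ≃o V)) : Set (V ≃o V))) {b : ℕ}
    (hub : u ^ 2 ^ b = 1) (hX : ∀ s ∈ T ⊔ Subgroup.zpowers g ⊔ Subgroup.zpowers u, s ⁻¹' X = X) :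
    ∃ x ∈ X, T ⊔ Subgroup.zpowers g ⊔ Subgroup.zpowers u ≤ MulAction.stabilizer (V ≃o V) x := by
  set H := T ⊔ Subgroup.zpowers g
  have hTH : T ≤ H := le_sup_left
  have hgH : g ∈ H := Subgroup.mem_sup_right (Subgroup.mem_zpowers g)
  have hHX : ∀ s ∈ H, s ⁻¹' X = X := fun s hs => hX s (Subgroup.mem_sup_left hs)
  have hT : OrderAcyclic (ZMod p) {x ∈ X | ∀ s ∈ T, s x = x} :=
    h.fixed_of_commute hp hcomm hpow fun s hs => hHX s (hTH hs)
  have hfixH : {x ∈ {x ∈ X | ∀ s ∈ T, s x = x} | g x = x} = {x ∈ X | ∀ s ∈ H, s x = x} := by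
    ext x
    refine ⟨fun ⟨⟨hx, hxT⟩, hxg⟩ => ⟨hx, ?_⟩,
      fun ⟨hx, hxH⟩ => ⟨⟨hx, fun s hs => hxH s (hTH hs)⟩, hxH g hgH⟩⟩
    exact (sup_le hxT ((Subgroup.zpowers_le).2 hxg) : H ≤ MulAction.stabilizer (V ≃o V) x)
  have heven := (hT.rat hp.one_lt).even_card_orderComplex_fixedPoints
    (preimage_fixedPoints_of_mem_normalizer hg (hHX g hgH))
  rw [hfixH] at heven
  obtain ⟨x, ⟨hx, hxH⟩, hxu⟩ := exists_mem_apply_eq_of_dvd_card_orderComplex Nat.prime_two hub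
    (preimage_fixedPoints_of_mem_normalizer hu
      (hX u (Subgroup.mem_sup_right (Subgroup.mem_zpowers u)))) heven.two_dvd
  exact ⟨x, hx, sup_le hxH ((Subgroup.zpowers_le).2 hxu)⟩

end Oliver

section GraphProperties

lemma exists_decisionTree_of_dependsOn {E : Type} (S : Finset E) :
    ∀ f : (E → Bool) → Bool, DependsOn f (S : Set E) →
      ∃ T : DecisionTree E, T.eval = f ∧ T.depth ≤ S.card := by
  induction S using Finset.induction_on with
  | empty =>
    intro f hf
    exact ⟨.leaf (f fun _ => true), funext fun x => hf (by simp), le_rfl⟩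
  | insert e S he ih =>
    intro f hf
    have hrestrict : ∀ b, ∃ T : DecisionTree E,
        (T.eval = fun x => f (Function.update x e b)) ∧ T.depth ≤ S.card := fun b =>
      ih _ (by simpa [Finset.erase_insert he] using hf.update e b)
    obtain ⟨T₁, hT₁, hd₁⟩ := hrestrict true
    obtain ⟨T₂, hT₂, hd₂⟩ := hrestrict false
    refine ⟨.node e T₁ T₂, funext fun x => ?_, ?_⟩
    · have hx := Function.update_eq_self e x
      cases hxe : x e <;> rw [hxe] at hx <;> simp [DecisionTree.eval, hxe, hT₁, hT₂, hx]
    · rw [Finset.card_insert_of_notMem he]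
      exact Nat.succ_le_succ (max_le hd₁ hd₂)

variable {n : ℕ}

instance : Fintype (EdgeVar n) :=
  inferInstanceAs (Fintype {p : Fin n × Fin n // p.1 < p.2})

lemma card_edgeVar : Fintype.card (EdgeVar n) = n * (n - 1) / 2 := by
  have e : EdgeVar n ≃ Σ j : Fin n, Finset.Iio j :=
    { toFun := fun q => ⟨q.1.2, q.1.1, Finset.mem_Iio.2 q.2⟩
      invFun := fun q => ⟨(q.2.1, q.1), Finset.mem_Iio.1 q.2.2⟩
      left_inv := fun _ => rfl
      right_inv := fun _ => rfl }
  rw [Fintype.card_congr e, Fintype.card_sigma, ← Finset.sum_range_id, Finset.sum_range]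
  simp only [Fintype.card_coe, Fin.card_Iio]

lemma exists_decisionTree_depth_lt_of_not_evasive {P : Set (SimpleGraph (Fin n))}
    (h : ¬ Evasive P) : ∃ T : DecisionTree (EdgeVar n),
      (∀ x, T.eval x = true ↔ graphOfInput x ∈ P) ∧ T.depth < Fintype.card (EdgeVar n) := by
  obtain ⟨T₀, hT₀, hd₀⟩ := exists_decisionTree_of_dependsOn (Finset.univ : Finset (EdgeVar n))
    (fun x => decide (graphOfInput x ∈ P)) (by simp [dependsOn_univ])
  have hT₀' : ∃ T : DecisionTree (EdgeVar n),
      (∀ x, T.eval x = true ↔ graphOfInput x ∈ P) ∧ T.depth ≤ Fintype.card (EdgeVar n) :=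
    ⟨T₀, fun x => by simp [hT₀], hd₀⟩
  obtain ⟨T, hT, hd⟩ := Nat.sInf_mem (s := {d | ∃ T : DecisionTree (EdgeVar n),
    (∀ x, T.eval x = true ↔ graphOfInput x ∈ P) ∧ T.depth ≤ d}) ⟨_, hT₀'⟩
  refine ⟨T, hT, hd.trans_lt ((Nat.sInf_le hT₀').lt_of_ne ?_)⟩
  rw [card_edgeVar]
  exact h

lemma graphOfInput_adj (x : EdgeVar n → Bool) (e : EdgeVar n) :
    (graphOfInput x).Adj e.1.1 e.1.2 ↔ x e = true := by
  obtain ⟨⟨i, j⟩, h⟩ := e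
  replace h : i < j := h
  simp [graphOfInput, h.ne, h, h.not_gt]

/-- The adjacency variables that are set in `G`. -/
def edgeVars (G : SimpleGraph (Fin n)) : Finset (EdgeVar n) :=
  Finset.univ.filter fun e => G.Adj e.1.1 e.1.2

lemma mem_edgeVars {G : SimpleGraph (Fin n)} {e : EdgeVar n} :
    e ∈ edgeVars G ↔ G.Adj e.1.1 e.1.2 := by
  simp [edgeVars]

lemma edgeVars_subset_iff {G H : SimpleGraph (Fin n)} : edgeVars G ⊆ edgeVars H ↔ G ≤ H := by
  refine ⟨fun h => ?_, fun h e he => mem_edgeVars.2 (h (mem_edgeVars.1 he))⟩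
  have hlt : ∀ i j : Fin n, i < j → G.Adj i j → H.Adj i j := fun i j hij hG =>
    mem_edgeVars.1 (h ((mem_edgeVars (e := ⟨(i, j), hij⟩)).2 hG))
  intro i j hG
  rcases hG.ne.lt_or_gt with hij | hji
  · exact hlt i j hij hG
  · exact (hlt j i hji hG.symm).symm

lemma edgeVars_graphOfInput (A : Finset (EdgeVar n)) :
    edgeVars (graphOfInput fun e => decide (e ∈ A)) = A := by
  ext e
  simp [mem_edgeVars, graphOfInput_adj]

/-- A graph on `Fin n` as the set of its adjacency variables. -/
def graphOrderIso (n : ℕ) : SimpleGraph (Fin n) ≃o Finset (EdgeVar n) where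
  toFun := edgeVars
  invFun A := graphOfInput fun e => decide (e ∈ A)
  left_inv G := by
    have h := edgeVars_graphOfInput (edgeVars G)
    exact le_antisymm (edgeVars_subset_iff.1 h.le) (edgeVars_subset_iff.1 h.ge)
  right_inv := edgeVars_graphOfInput
  map_rel_iff' := edgeVars_subset_iff

lemma orderAcyclic_of_not_evasive {R : Type*} [CommRing R] {P : Set (SimpleGraph (Fin n))}
    (hmono : MonotoneDecreasing P) (hne : P.Nonempty) (h : ¬ Evasive P) :
    OrderAcyclic R {G ∈ P | G ≠ ⊥} := by
  set e := graphOrderIso n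
  obtain ⟨T, hT, hdepth⟩ := exists_decisionTree_depth_lt_of_not_evasive h
  obtain ⟨G₀, hG₀⟩ := hne
  have hacyc : OrderAcyclic R (nonemptyFaces Finset.univ (e.symm ⁻¹' P)) :=
    orderAcyclic_nonemptyFaces_of_decisionTree (B := ∅) (T := T)
      (fun A A' hA'A hA => hmono _ _ (e.symm.monotone hA'A) hA)
      (hmono G₀ _ (e.symm_apply_le.2 (Finset.empty_subset _)) hG₀) (by simp)
      (fun A _ => by rw [hT, Finset.union_empty]; rfl) hdepth
  convert hacyc.preimage e using 1
  ext G
  have hbot : e G = ∅ ↔ G = ⊥ := map_eq_bot_iff e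
  simp [nonemptyFaces, Finset.nonempty_iff_ne_empty, hbot]

/-- The action of the permutations of the vertices on graphs by relabelling. -/
def relabelHom (W : Type*) : Equiv.Perm W →* (SimpleGraph W ≃o SimpleGraph W) where
  toFun σ :=
    { toEquiv := σ.simpleGraph
      map_rel_iff' := fun {G H} => by
        refine ⟨fun h v w hG => ?_, fun h v w hG => h hG⟩
        simpa [Equiv.simpleGraph] using
          h (show (G.comap σ.symm).Adj (σ v) (σ w) by simpa using hG) }
  map_one' := rfl
  map_mul' _ _ := rfl

/-- The automorphism group of `G`, as a group of permutations of the vertices. -/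
def graphAut {W : Type*} (G : SimpleGraph W) : Subgroup (Equiv.Perm W) :=
  (MulAction.stabilizer (SimpleGraph W ≃o SimpleGraph W) G).comap (relabelHom W)

lemma mem_graphAut {W : Type*} {G : SimpleGraph W} {σ : Equiv.Perm W} :
    σ ∈ graphAut G ↔ ∀ v w, G.Adj (σ v) (σ w) ↔ G.Adj v w := by
  change G.comap σ.symm = G ↔ _
  refine ⟨fun h v w => ?_, fun h => ?_⟩
  · simpa using congrArg (SimpleGraph.Adj · (σ v) (σ w)) h.symm
  · ext v w
    simpa using (h (σ.symm v) (σ.symm w)).symm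

lemma IsGraphProperty.preimage_relabelHom {P : Set (SimpleGraph (Fin n))} (hP : IsGraphProperty P)
    (σ : Equiv.Perm (Fin n)) : relabelHom (Fin n) σ ⁻¹' P = P := by
  have hmem : ∀ τ : Equiv.Perm (Fin n), ∀ G ∈ P, relabelHom (Fin n) τ G ∈ P := fun τ G hG => by
    have := hP τ G hG
    rwa [← SimpleGraph.comap_symm] at this
  refine Set.Subset.antisymm (fun G hG => ?_) (hmem σ)
  simpa using hmem σ⁻¹ _ hG

theorem exists_invariant_graph {p b : ℕ} (hp : p.Prime) {P : Set (SimpleGraph (Fin n))}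
    (hP : IsGraphProperty P) (hmono : MonotoneDecreasing P) (hne : P.Nonempty) (hev : ¬ Evasive P)
    {Γ : Type*} [Group Γ] (ρ : Γ →* Equiv.Perm (Fin n)) {T : Subgroup Γ}
    (hcomm : ∀ s ∈ T, ∀ t ∈ T, Commute s t) (hpow : ∀ t ∈ T, t ^ p = 1) {g u : Γ}
    (hg : g ∈ Subgroup.normalizer (T : Set Γ))
    (hu : u ∈ Subgroup.normalizer ((T ⊔ .zpowers g : Subgroup Γ) : Set Γ))
    (hub : u ^ 2 ^ b = 1) :
    ∃ G ∈ P, G ≠ ⊥ ∧ T ⊔ Subgroup.zpowers g ⊔ Subgroup.zpowers u ≤ (graphAut G).comap ρ := by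
  set φ := (relabelHom (Fin n)).comp ρ
  have hgmap : φ g ∈ Subgroup.normalizer (T.map φ : Set _) :=
    Subgroup.le_normalizer_map φ (Subgroup.mem_map_of_mem φ hg)
  have humap := Subgroup.le_normalizer_map φ (Subgroup.mem_map_of_mem φ hu)
  rw [Subgroup.map_sup, MonoidHom.map_zpowers] at humap
  have hmap : T.map φ ⊔ Subgroup.zpowers (φ g) ⊔ Subgroup.zpowers (φ u) =
      (T ⊔ Subgroup.zpowers g ⊔ Subgroup.zpowers u).map φ := by
    simp only [Subgroup.map_sup, MonoidHom.map_zpowers]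
  obtain ⟨G, ⟨hGP, hG⟩, hstab⟩ :=
    (orderAcyclic_of_not_evasive (R := ZMod p) hmono hne hev).exists_le_stabilizer hp
      (T := T.map φ) (g := φ g) (u := φ u) (b := b)
      (by
        rintro _ ⟨s, hs, rfl⟩ _ ⟨t, ht, rfl⟩
        exact (hcomm s hs t ht).map φ)
      (by
        rintro _ ⟨t, ht, rfl⟩
        rw [← map_pow, hpow t ht, map_one])
      hgmap humap (by rw [← map_pow, hub, map_one])
      (by
        rw [hmap]
        rintro _ ⟨γ, -, rfl⟩
        ext G
        exact and_congr (Set.ext_iff.1 (hP.preimage_relabelHom (ρ γ)) G)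
          (not_congr (map_eq_bot_iff (φ γ))))
  rw [hmap, Subgroup.map_le_iff_le_comap] at hstab
  exact ⟨G, hGP, hG, hstab⟩

end GraphProperties

section BlockGroup

variable {p k r : ℕ}

/-- The translations of the blocks `ZMod p × {j}`, the `j`-th one by `b j`. -/
def blockShift : Multiplicative (ZMod k → ZMod p) →* Equiv.Perm (ZMod p × ZMod k) where
  toFun b :=
    { toFun := fun z => (z.1 + b.toAdd z.2, z.2)
      invFun := fun z => (z.1 - b.toAdd z.2, z.2)
      left_inv := fun z => by simp
      right_inv := fun z => by simp }
  map_one' := by ext z <;> simp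
  map_mul' b c := by ext z <;> simp [add_assoc, add_comm (b.toAdd _)]

lemma blockShift_apply (b : Multiplicative (ZMod k → ZMod p)) (z : ZMod p × ZMod k) :
    blockShift b z = (z.1 + b.toAdd z.2, z.2) := rfl

/-- The cyclic shift of the blocks, twisted by multiplication with `a` on return to the block `0`:
unlike the untwisted one, its powers also act on the single blocks by the powers of `a`. -/
def blockCycle (a : (ZMod p)ˣ) : Equiv.Perm (ZMod p × ZMod k) where
  toFun z := ((if z.2 + 1 = 0 then a else 1 : (ZMod p)ˣ) * z.1, z.2 + 1)
  invFun z := (((if z.2 = 0 then a else 1 : (ZMod p)ˣ)⁻¹ : (ZMod p)ˣ) * z.1, z.2 - 1)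
  left_inv z := by simp
  right_inv z := by simp

lemma blockCycle_apply (a : (ZMod p)ˣ) (z : ZMod p × ZMod k) :
    blockCycle a z = ((if z.2 + 1 = 0 then a else 1 : (ZMod p)ˣ) * z.1, z.2 + 1) := rfl

lemma blockCycle_pow_apply_zero (a : (ZMod p)ˣ) (m : ℕ) (x : ZMod p) :
    (blockCycle a ^ m) (x, (0 : ZMod k)) = ((a ^ (m / k) : (ZMod p)ˣ) * x, (m : ZMod k)) := by
  induction m with
  | zero => simp
  | succ m ih =>
    have hreturn : (m : ZMod k) + 1 = 0 ↔ k ∣ m + 1 := by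
      rw [← ZMod.natCast_eq_zero_iff, Nat.cast_add_one]
    rw [pow_succ', Equiv.Perm.mul_apply, ih, blockCycle_apply]
    by_cases h : k ∣ m + 1
    · simp [hreturn, h, Nat.succ_div, pow_succ', mul_assoc]
    · simp [hreturn, h, Nat.succ_div]

lemma blockCycle_pow_val_apply [NeZero k] (a : (ZMod p)ˣ) (z : ZMod p × ZMod k) :
    (blockCycle a ^ z.2.val) (z.1, 0) = z := by
  rw [blockCycle_pow_apply_zero, Nat.div_eq_of_lt (ZMod.val_lt z.2), ZMod.natCast_zmod_val,
    pow_zero, Units.val_one, one_mul]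

lemma blockCycle_pow_eq_one [Fact p.Prime] [NeZero k] (a : (ZMod p)ˣ) :
    blockCycle (k := k) a ^ (k * (p - 1)) = 1 := by
  ext1 z
  have hzero : (blockCycle a ^ (k * (p - 1))) (z.1, (0 : ZMod k)) = (z.1, 0) := by
    simp [blockCycle_pow_apply_zero, NeZero.pos k, ZMod.units_pow_card_sub_one_eq_one]
  conv_lhs => rw [← blockCycle_pow_val_apply a z]
  rw [← Equiv.Perm.mul_apply, ← pow_add, add_comm, pow_add, Equiv.Perm.mul_apply, hzero,
    blockCycle_pow_val_apply, Equiv.Perm.one_apply]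

lemma blockCycle_mul_blockShift (a : (ZMod p)ˣ) (b : Multiplicative (ZMod k → ZMod p)) :
    blockCycle a * blockShift b = blockShift (.ofAdd fun j =>
      ((if j = 0 then a else 1 : (ZMod p)ˣ) : ZMod p) * b.toAdd (j - 1)) * blockCycle a := by
  ext z <;> simp [blockCycle_apply, blockShift_apply, mul_add]

lemma addRight_one_pow_val [NeZero r] (y : ZMod r) :
    Equiv.addRight (1 : ZMod r) ^ y.val = Equiv.addRight y := by
  rw [Equiv.nsmul_addRight, nsmul_one, ZMod.natCast_zmod_val]

lemma mk_pow_pow_mem_zpowers {G H : Type*} [Group G] [Group H] {σ : G} {τ : H} {a b : ℕ}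
    (hσ : σ ^ a = 1) (hτ : τ ^ b = 1) (hab : a.Coprime b) (i j : ℕ) :
    (σ ^ i, τ ^ j) ∈ Subgroup.zpowers (σ, τ) := by
  obtain ⟨m, hmi, hmj⟩ := Nat.chineseRemainder hab i j
  refine Subgroup.mem_zpowers_iff.2 ⟨m, ?_⟩
  rw [zpow_natCast, Prod.pow_mk, pow_eq_pow_of_modEq hmi hσ, pow_eq_pow_of_modEq hmj hτ]

/-- The vertices: `k` blocks of size `p` and one of size `r`. -/
abbrev BlockVertex (p k r : ℕ) : Type := (ZMod p × ZMod k) ⊕ ZMod r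

/-- The permutations of `BlockVertex p k r` preserving the block of size `r`. -/
abbrev BlockPerm (p k r : ℕ) : Type := Equiv.Perm (ZMod p × ZMod k) × Equiv.Perm (ZMod r)

/-- The elementary abelian `p`-group of the translations of the blocks of size `p`. -/
def blockTranslations (p k r : ℕ) : Subgroup (BlockPerm p k r) := blockShift.range.prod ⊥

/-- The twisted cyclic shift of the blocks of size `p` together with the cyclic shift of the block
of size `r`. -/
def blockRotation (a : (ZMod p)ˣ) : BlockPerm p k r := (blockCycle a, Equiv.addRight 1)

/-- The multiplication by `ω` on the block of size `r`. -/
def blockDilation (ω : (ZMod r)ˣ) : BlockPerm p k r :=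
  (1, MulAction.toPermHom (ZMod r)ˣ (ZMod r) ω)

lemma blockDilation_pow (ω : (ZMod r)ˣ) (m : ℕ) :
    blockDilation (p := p) (k := k) ω ^ m = blockDilation (ω ^ m) := by
  simp [blockDilation, map_pow]

/-- The group acting on the vertices, an extension of a `p`-group by a cyclic group by a
`2`-group. -/
def blockGroup (k : ℕ) (a : (ZMod p)ˣ) (ω : (ZMod r)ˣ) : Subgroup (BlockPerm p k r) :=
  blockTranslations p k r ⊔ Subgroup.zpowers (blockRotation a) ⊔
    Subgroup.zpowers (blockDilation ω)

lemma commute_of_mem_blockTranslations {s t : BlockPerm p k r} (hs : s ∈ blockTranslations p k r)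
    (ht : t ∈ blockTranslations p k r) : Commute s t := by
  obtain ⟨⟨b, hb⟩, hs2⟩ := hs
  obtain ⟨⟨c, hc⟩, ht2⟩ := ht
  refine Prod.ext ?_ ?_
  · simp only [Prod.fst_mul, ← hb, ← hc]
    exact ((Commute.all b c).map blockShift).eq
  · rw [Prod.snd_mul, Prod.snd_mul, Subgroup.mem_bot.1 hs2, Subgroup.mem_bot.1 ht2]

lemma pow_eq_one_of_mem_blockTranslations {t : BlockPerm p k r}
    (ht : t ∈ blockTranslations p k r) : t ^ p = 1 := by
  obtain ⟨⟨b, hb⟩, ht2⟩ := ht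
  have hbp : b ^ p = 1 := Multiplicative.toAdd.injective (by ext; simp)
  refine Prod.ext ?_ ?_
  · rw [Prod.pow_fst, ← hb, ← map_pow, hbp, map_one, Prod.fst_one]
  · rw [Prod.pow_snd, Subgroup.mem_bot.1 ht2, one_pow, Prod.snd_one]

variable [NeZero k] [NeZero r]

lemma blockRotation_mem_normalizer [NeZero p] (a : (ZMod p)ˣ) :
    blockRotation a ∈ Subgroup.normalizer (blockTranslations p k r : Set (BlockPerm p k r)) := by
  refine Subgroup.mem_normalizer_fintype ?_
  rintro t ⟨⟨b, hb⟩, ht2⟩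
  refine ⟨⟨_, (mul_inv_eq_iff_eq_mul.2 (blockCycle_mul_blockShift a b)).symm.trans ?_⟩, ?_⟩
  · rw [hb]
    rfl
  · simpa using ht2

lemma mk_blockCycle_pow_addRight_mem_zpowers [Fact p.Prime]
    (hcop : (k * (p - 1)).Coprime r) (a : (ZMod p)ˣ) (i : ℕ) (y : ZMod r) :
    (blockCycle a ^ i, Equiv.addRight y) ∈
      Subgroup.zpowers (blockRotation a : BlockPerm p k r) := by
  have hr : Equiv.addRight (1 : ZMod r) ^ r = 1 := by
    ext
    simp
  rw [← addRight_one_pow_val]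
  exact mk_pow_pow_mem_zpowers (blockCycle_pow_eq_one a) hr hcop i y.val

lemma blockDilation_mem_normalizer [Fact p.Prime] (hcop : (k * (p - 1)).Coprime r)
    (a : (ZMod p)ˣ) (ω : (ZMod r)ˣ) :
    blockDilation ω ∈ Subgroup.normalizer
      ((blockTranslations p k r ⊔ .zpowers (blockRotation a) : Subgroup (BlockPerm p k r)) :
        Set (BlockPerm p k r)) := by
  set H := blockTranslations p k r ⊔ .zpowers (blockRotation a)
  have htrans : blockTranslations p k r ≤ H.comap (MulAut.conj (blockDilation ω)).toMonoidHom := by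
    refine fun t ht => Subgroup.mem_sup_left ?_
    have hcomm : blockDilation ω * t = t * blockDilation ω := by
      ext1
      · simp [blockDilation]
      · simp [Subgroup.mem_bot.1 ht.2]
    simpa [hcomm] using ht
  have hrot : Subgroup.zpowers (blockRotation a) ≤
      H.comap (MulAut.conj (blockDilation ω)).toMonoidHom := by
    rw [Subgroup.zpowers_le]
    refine Subgroup.mem_sup_right ?_
    convert mk_blockCycle_pow_addRight_mem_zpowers hcop a 1 (ω : ZMod r) using 1
    rw [MulEquiv.coe_toMonoidHom, MulAut.conj_apply, mul_inv_eq_iff_eq_mul]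
    ext <;> simp [blockDilation, blockRotation, Units.smul_def]
  exact Subgroup.mem_normalizer_fintype fun t ht => sup_le htrans hrot ht

end BlockGroup

section EdgeCount

variable {W ι : Type*} [Fintype W] [Fintype ι] {G : SimpleGraph W}

lemma card_le_degree_of_injective {v : W} {f : ι → W} (hf : Function.Injective f)
    (h : ∀ i, G.Adj v (f i)) : Fintype.card ι ≤ G.degree v := by
  rw [← SimpleGraph.card_neighborSet_eq_degree]
  exact Fintype.card_le_of_injective (fun i => ⟨f i, h i⟩)
    fun i j hij => hf (congrArg Subtype.val hij)

lemma card_mul_le_two_mul_ncard_edgeSet {f : ι → W} (hf : Function.Injective f) {d : ℕ}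
    (h : ∀ i, d ≤ G.degree (f i)) : Fintype.card ι * d ≤ 2 * G.edgeSet.ncard := by
  calc Fintype.card ι * d ≤ ∑ i, G.degree (f i) := by
        simpa using Finset.card_nsmul_le_sum Finset.univ _ d fun i _ => h i
    _ = ∑ v ∈ Finset.univ.map ⟨f, hf⟩, G.degree v :=
        (Finset.sum_map Finset.univ ⟨f, hf⟩ fun v => G.degree v).symm
    _ ≤ ∑ v, G.degree v := Finset.sum_le_sum_of_subset (Finset.subset_univ _)
    _ = 2 * G.edgeSet.ncard := by
        rw [G.sum_degrees_eq_twice_card_edges, ← SimpleGraph.coe_edgeFinset, Set.ncard_coe_finset]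

lemma degree_eq_of_mem_graphAut {σ : Equiv.Perm W} (hσ : σ ∈ graphAut G) {v w : W}
    (h : σ v = w) : G.degree w = G.degree v :=
  h ▸ SimpleGraph.Iso.degree_eq (⟨σ, fun {v w} => mem_graphAut.1 hσ v w⟩ : G ≃g G) v

end EdgeCount

section InvariantGraphs

variable {p k r : ℕ} {a : (ZMod p)ˣ} {ω : (ZMod r)ˣ} {G : SimpleGraph (BlockVertex p k r)}
  (hG : blockGroup k a ω ≤ (graphAut G).comap (Equiv.Perm.sumCongrHom _ _))

include hG

lemma sumCongr_blockShift_mem_graphAut (b : ZMod k → ZMod p) :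
    Equiv.Perm.sumCongr (blockShift (.ofAdd b)) 1 ∈ graphAut G :=
  hG (x := (blockShift (.ofAdd b), 1))
    (Subgroup.mem_sup_left (Subgroup.mem_sup_left ⟨⟨_, rfl⟩, Subgroup.mem_bot.2 rfl⟩))

lemma sumCongr_one_smul_mem_graphAut (m : ℕ) :
    Equiv.Perm.sumCongr 1 (MulAction.toPermHom (ZMod r)ˣ (ZMod r) (ω ^ m)) ∈ graphAut G := by
  refine hG (x := blockDilation (ω ^ m)) (Subgroup.mem_sup_right ?_)
  rw [← blockDilation_pow]
  exact pow_mem (Subgroup.mem_zpowers _) m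

variable [NeZero k] [Fact p.Prime] [NeZero r] (hcop : (k * (p - 1)).Coprime r)

include hcop

lemma sumCongr_blockCycle_pow_addRight_mem_graphAut (i : ℕ) (y : ZMod r) :
    Equiv.Perm.sumCongr (blockCycle a ^ i) (Equiv.addRight y) ∈ graphAut G :=
  hG (x := (blockCycle a ^ i, Equiv.addRight y)) (Subgroup.mem_sup_left
    (Subgroup.mem_sup_right (mk_blockCycle_pow_addRight_mem_zpowers hcop a i y)))

lemma degree_inl (z : ZMod p × ZMod k) : G.degree (.inl z) = G.degree (.inl (0, 0)) := by
  have hcycle : (blockCycle a ^ z.2.val) (0, 0) = (0, z.2) := blockCycle_pow_val_apply a (0, z.2)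
  have hshift : blockShift (.ofAdd fun _ => z.1) (0, z.2) = z := by simp [blockShift_apply]
  calc G.degree (.inl z) = G.degree (.inl (0, z.2)) :=
        degree_eq_of_mem_graphAut (sumCongr_blockShift_mem_graphAut hG fun _ => z.1)
          (congrArg Sum.inl hshift)
    _ = G.degree (.inl (0, 0)) :=
        degree_eq_of_mem_graphAut
          (sumCongr_blockCycle_pow_addRight_mem_graphAut hG hcop z.2.val 0)
          (congrArg Sum.inl hcycle)

lemma degree_inr (y : ZMod r) : G.degree (.inr y) = G.degree (.inr 0) :=
  degree_eq_of_mem_graphAut (sumCongr_blockCycle_pow_addRight_mem_graphAut hG hcop 0 y)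
    (congrArg Sum.inr (zero_add y))

lemma sub_one_le_degree_inl_zero (ha : ∀ c, c ∈ Subgroup.zpowers a) (hpr : p - 1 ≤ r)
    {w : BlockVertex p k r} (hw : G.Adj (.inl (0, 0)) w) : p - 1 ≤ G.degree (.inl (0, 0)) := by
  have hcard : Fintype.card (ZMod p)ˣ = p - 1 := by
    rw [ZMod.card_units_eq_totient, Nat.totient_prime Fact.out]
  suffices h : ∃ f : (ZMod p)ˣ → BlockVertex p k r, Function.Injective f ∧
      ∀ c, G.Adj (.inl (0, 0)) (f c) by
    obtain ⟨f, hf, hadj⟩ := h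
    exact hcard ▸ card_le_degree_of_injective hf hadj
  rcases w with ⟨x, j⟩ | y
  · by_cases hj : j = 0
    · subst hj
      have hx : x ≠ 0 := fun h => hw.ne (by rw [h])
      refine ⟨fun c => .inl (c * x, 0), fun c d hcd => ?_, fun c => ?_⟩
      · simpa [hx, Units.ext_iff] using hcd
      · obtain ⟨m, rfl⟩ := mem_powers_iff_mem_zpowers.2 (ha c)
        simpa [blockCycle_pow_apply_zero, NeZero.pos k] using (mem_graphAut.1
          (sumCongr_blockCycle_pow_addRight_mem_graphAut hG hcop (k * m) 0) _ _).2 hw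
    · refine ⟨fun c => .inl (x + c, j), fun c d hcd => ?_, fun c => ?_⟩
      · simpa [Units.ext_iff] using hcd
      · simpa [blockShift_apply, Ne.symm hj] using
          (mem_graphAut.1 (sumCongr_blockShift_mem_graphAut hG (Pi.single j c)) _ _).2 hw
  · obtain ⟨f⟩ : Nonempty ((ZMod p)ˣ ↪ ZMod r) := by
      rwa [Function.Embedding.nonempty_iff_card_le, hcard, ZMod.card]
    refine ⟨fun c => .inr (y + f c), fun c d hcd => by simpa using hcd, fun c => ?_⟩
    simpa using (mem_graphAut.1
      (sumCongr_blockCycle_pow_addRight_mem_graphAut hG hcop 0 (f c)) _ _).2 hw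

lemma orderOf_le_degree_inr_zero [Fact r.Prime] {y y' : ZMod r}
    (hy : G.Adj (.inr y) (.inr y')) : orderOf ω ≤ G.degree (.inr 0) := by
  have hd : y' - y ≠ 0 := fun h => hy.ne (by rw [sub_eq_zero.1 h])
  have hzero : G.Adj (.inr 0) (.inr (y' - y)) := by
    simpa [sub_eq_add_neg] using (mem_graphAut.1
      (sumCongr_blockCycle_pow_addRight_mem_graphAut hG hcop 0 (-y)) _ _).2 hy
  rw [← Fintype.card_zpowers]
  refine card_le_degree_of_injective
    (f := fun c : Subgroup.zpowers ω => .inr ((c : (ZMod r)ˣ) * (y' - y)))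
    (fun c d hcd => Subtype.ext (Units.ext (mul_right_cancel₀ hd (Sum.inr_injective hcd)))) ?_
  rintro ⟨c, hc⟩
  obtain ⟨m, rfl⟩ := mem_powers_iff_mem_zpowers.2 hc
  simpa [Units.smul_def] using (mem_graphAut.1 (sumCongr_one_smul_mem_graphAut hG m) _ _).2 hzero

lemma min_le_two_mul_ncard_edgeSet [Fact r.Prime] (ha : ∀ c, c ∈ Subgroup.zpowers a)
    (hpr : p - 1 ≤ r) (hbot : G ≠ ⊥) :
    min (k * p * (p - 1)) (r * orderOf ω) ≤ 2 * G.edgeSet.ncard := by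
  have hinl : ∀ {z w}, G.Adj (.inl z) w → k * p * (p - 1) ≤ 2 * G.edgeSet.ncard := by
    intro z w hzw
    have hpos : 0 < G.degree (.inl (0, 0)) := by
      rw [← degree_inl hG hcop z]
      exact (G.degree_pos_iff_exists_adj _).2 ⟨w, hzw⟩
    obtain ⟨w₀, hw₀⟩ := (G.degree_pos_iff_exists_adj _).1 hpos
    simpa [mul_comm p k] using card_mul_le_two_mul_ncard_edgeSet (Sum.inl_injective)
      fun z => (sub_one_le_degree_inl_zero hG hcop ha hpr hw₀).trans (degree_inl hG hcop z).ge
  obtain ⟨v, w, hvw⟩ := SimpleGraph.ne_bot_iff_exists_adj.1 hbot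
  rcases v with z | y
  · exact min_le_of_left_le (hinl hvw)
  · rcases w with z | y'
    · exact min_le_of_left_le (hinl hvw.symm)
    · refine min_le_of_right_le ?_
      simpa using card_mul_le_two_mul_ncard_edgeSet (Sum.inr_injective)
        fun y => (orderOf_le_degree_inr_zero hG hcop hvw).trans (degree_inr hG hcop y).ge

end InvariantGraphs

section BlockDecomposition

/-- A splitting of `n` vertices into `k` blocks of size `p` and one of size `r`, with the arithmetic
conditions under which the group `blockGroup k a ω`, for `a` a generator and `ω` of order `2 ^ β`,
satisfies the hypotheses of Oliver's theorem. -/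
structure IsBlockDecomposition (n p k r β : ℕ) : Prop where
  prime_left : p.Prime
  prime_right : r.Prime
  pos : 0 < k
  eq_mul_add : n = p * k + r
  coprime : (k * (p - 1)).Coprime r
  two_pow_dvd : 2 ^ β ∣ r - 1
  sub_one_le : p - 1 ≤ r

variable {n p k r β : ℕ}

lemma exists_orderOf_eq_of_dvd_card {α : Type*} [Group α] [Finite α] [IsCyclic α] {d : ℕ}
    (hd : d ∣ Nat.card α) : ∃ g : α, orderOf g = d := by
  obtain ⟨g, hg⟩ := IsCyclic.exists_ofOrder_eq_natCard (α := α)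
  obtain ⟨m, hm⟩ := hd
  have hpos : 0 < m := Nat.pos_of_ne_zero fun h => Nat.card_pos.ne' (by rw [hm, h, mul_zero])
  refine ⟨g ^ m, ?_⟩
  rw [orderOf_pow_of_dvd hpos.ne' ⟨d, by rw [hg, hm, mul_comm]⟩, hg, hm, Nat.mul_div_cancel _ hpos]

theorem IsBlockDecomposition.exists_many_edges (h : IsBlockDecomposition n p k r β)
    {P : Set (SimpleGraph (Fin n))} (hP : IsGraphProperty P) (hmono : MonotoneDecreasing P)
    (hne : P.Nonempty) (hev : ¬ Evasive P) :
    ∃ G ∈ P, min (k * p * (p - 1)) (r * 2 ^ β) ≤ 2 * G.edgeSet.ncard := by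
  have : Fact p.Prime := ⟨h.prime_left⟩
  have : Fact r.Prime := ⟨h.prime_right⟩
  have : NeZero k := ⟨h.pos.ne'⟩
  obtain ⟨a, ha⟩ := IsCyclic.exists_generator (α := (ZMod p)ˣ)
  obtain ⟨ω, hω⟩ : ∃ ω : (ZMod r)ˣ, orderOf ω = 2 ^ β := by
    apply exists_orderOf_eq_of_dvd_card
    rw [Nat.card_eq_fintype_card, ZMod.card_units]
    exact h.two_pow_dvd
  let ψ : Fin n ≃ BlockVertex p k r := Fintype.equivOfCardEq (by simp [ZMod.card, h.eq_mul_add])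
  obtain ⟨G, hGP, hG, hinv⟩ := exists_invariant_graph (b := β) h.prime_left hP hmono hne hev
    (ψ.symm.permCongrHom.toMonoidHom.comp (Equiv.Perm.sumCongrHom _ _))
    (fun _ hs _ ht => commute_of_mem_blockTranslations hs ht)
    (fun _ ht => pow_eq_one_of_mem_blockTranslations ht)
    (blockRotation_mem_normalizer a) (blockDilation_mem_normalizer h.coprime a ω)
    (by rw [blockDilation_pow, ← hω, pow_orderOf_eq_one, blockDilation, map_one, Prod.mk_one_one])
  have hinv' : blockGroup k a ω ≤
      (graphAut (G.comap ψ.symm)).comap (Equiv.Perm.sumCongrHom _ _) := fun s hs =>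
    mem_graphAut.2 fun v w => by simpa using mem_graphAut.1 (hinv hs) (ψ.symm v) (ψ.symm w)
  let e : G.comap ψ.symm ≃g G := SimpleGraph.Iso.comap ψ.symm G
  have hbot : G.comap ψ.symm ≠ ⊥ := by
    obtain ⟨v, w, hvw⟩ := SimpleGraph.ne_bot_iff_exists_adj.1 hG
    exact SimpleGraph.ne_bot_iff_exists_adj.2 ⟨ψ v, ψ w, by simpa using hvw⟩
  have hcard : (G.comap ψ.symm).edgeSet.ncard = G.edgeSet.ncard := Nat.card_congr e.mapEdgeSet
  refine ⟨G, hGP, ?_⟩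
  rw [← hω, ← hcard]
  exact min_le_two_mul_ncard_edgeSet hinv' h.coprime ha h.sub_one_le hbot

end BlockDecomposition

section PrimesInProgressions

lemma exists_prime_not_dvd {n y : ℕ} (hn : n ≠ 0) (hy : y ≠ 0) (hny : n ≤ y ^ 3) :
    ∃ p, p.Prime ∧ ¬ p ∣ n ∧ y < p ∧ p ≤ 8 * y := by
  by_contra! h
  have hdvd : ∀ p, p.Prime → y < p → p ≤ 8 * y → p ∣ n := fun p hp hyp hpy => by
    by_contra hpn
    exact (h p hp hpn hyp).not_ge hpy
  obtain ⟨p, hp, hyp, hpy⟩ := Nat.exists_prime_lt_and_le_two_mul y hy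
  obtain ⟨q, hq, hpq, hqp⟩ := Nat.exists_prime_lt_and_le_two_mul p hp.ne_zero
  obtain ⟨l, hl, hql, hlq⟩ := Nat.exists_prime_lt_and_le_two_mul q hq.ne_zero
  have hpq_coprime : p.Coprime q := (Nat.coprime_primes hp hq).2 hpq.ne
  have hpql_coprime : (p * q).Coprime l :=
    ((Nat.coprime_primes hp hl).2 (hpq.trans hql).ne).mul_left
      ((Nat.coprime_primes hq hl).2 hql.ne)
  have hprod : p * q * l ∣ n := hpql_coprime.mul_dvd_of_dvd_of_dvd
    (hpq_coprime.mul_dvd_of_dvd_of_dvd (hdvd p hp hyp (by omega))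
      (hdvd q hq (by omega) (by omega))) (hdvd l hl (by omega) (by omega))
  have hlt : y ^ 3 < p * q * l := by
    calc y ^ 3 = y * y * y := by ring
      _ < p * q * l := by gcongr <;> omega
  exact (Nat.le_of_dvd (Nat.pos_of_ne_zero hn) hprod).not_gt (hny.trans_lt hlt)

/-- A Linnik-type bound: the least prime in a reduced residue class modulo `m` is at most
`C * m ^ s`. -/
def LeastPrimeBound (C s : ℝ) : Prop :=
  ∀ m : ℕ, 2 ≤ m → ∀ a : ℕ, Nat.Coprime a m →
    ∃ p : ℕ, p.Prime ∧ p % m = a % m ∧ (p : ℝ) ≤ C * (m : ℝ) ^ s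

variable {C s : ℝ}

lemma LeastPrimeBound.pos (h : LeastPrimeBound C s) : 0 < C := by
  obtain ⟨p, hp, -, hpC⟩ := h 2 le_rfl 1 (Nat.coprime_one_left 2)
  have hp0 : (0 : ℝ) < p := by exact_mod_cast hp.pos
  exact pos_of_mul_pos_left (hp0.trans_le hpC) (by positivity)

-- Prescribing a residue in `[u * v, 2 * u * v)` modulo `2 * u * v` excludes primes below `u * v`.
lemma LeastPrimeBound.exists_modEq_modEq (h : LeastPrimeBound C s) {u v a b : ℕ} (hu : u ≠ 0)
    (hv : v ≠ 0) (hv2 : 2 ∣ v) (huv : u.Coprime v) (ha : a.Coprime u) (hb : b.Coprime v) :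
    ∃ r : ℕ, r.Prime ∧ r ≡ a [MOD u] ∧ r ≡ b [MOD v] ∧ u * v ≤ r ∧
      (r : ℝ) ≤ C * ((2 * (u * v) : ℕ) : ℝ) ^ s := by
  obtain ⟨c, ⟨hca, hcb⟩, hc⟩ : ∃ c, (c ≡ a [MOD u] ∧ c ≡ b [MOD v]) ∧ c < u * v :=
    ⟨_, (Nat.chineseRemainder huv a b).2, Nat.chineseRemainder_lt_mul huv a b hu hv⟩
  have hca' : c + u * v ≡ a [MOD u] := by simpa [Nat.ModEq] using hca
  have hcb' : c + u * v ≡ b [MOD v] := by simpa [Nat.ModEq] using hcb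
  have hcu : (c + u * v).Coprime u := hca'.gcd_eq.trans ha
  have hcv : (c + u * v).Coprime v := hcb'.gcd_eq.trans hb
  obtain ⟨r, hr, hrc, hrC⟩ := h (2 * (u * v)) (by have := Nat.mul_ne_zero hu hv; omega)
    (c + u * v) ((hcv.coprime_dvd_right hv2).mul_right (hcu.mul_right hcv))
  have hrmod : r ≡ c + u * v [MOD 2 * (u * v)] := hrc
  refine ⟨r, hr, (hrmod.of_dvd ⟨2 * v, by ring⟩).trans hca',
    (hrmod.of_dvd ⟨2 * u, by ring⟩).trans hcb', ?_, hrC⟩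
  calc u * v ≤ (c + u * v) % (2 * (u * v)) := by
        rw [Nat.mod_eq_of_lt (by omega)]
        omega
    _ = r % (2 * (u * v)) := hrc.symm
    _ ≤ r := Nat.mod_le _ _

lemma exists_isBlockDecomposition_of_modEq {n p r β : ℕ} (hp : p.Prime) (hr : r.Prime)
    (hmod : r ≡ n [MOD p]) (hβ : 2 ^ β ∣ r - 1) (hpr : p ≤ r) (hrn : r < n) (hnpr : n < p * r) :
    ∃ k, IsBlockDecomposition n p k r β := by
  obtain ⟨k, hk⟩ := (Nat.modEq_iff_dvd' hrn.le).1 hmod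
  have hkpos : k ≠ 0 := by
    rintro rfl
    omega
  have hkr : k < r := lt_of_mul_lt_mul_left (by omega : p * k < p * r) (Nat.zero_le p)
  have hp2 := hp.two_le
  exact ⟨k, hp, hr, Nat.pos_of_ne_zero hkpos, by omega,
    (Nat.coprime_of_lt_prime hkpos hkr hr).symm.mul_left
      (Nat.coprime_of_lt_prime (by omega) (by omega) hr).symm, hβ, by omega⟩

lemma IsBlockDecomposition.pow_three_le {n p k r β y : ℕ} (h : IsBlockDecomposition n p k r β)
    (hyp : y < p) (hrn : 2 * r ≤ n) (hyr : y ^ 2 ≤ 2 * r) (hyβ : y ≤ 2 * 2 ^ β) :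
    y ^ 3 ≤ 4 * min (k * p * (p - 1)) (r * 2 ^ β) := by
  have hn := h.eq_mul_add
  have hkp : y ^ 2 ≤ 2 * (k * p) := by
    rw [mul_comm k]
    omega
  rw [mul_min_of_nonneg _ _ (Nat.zero_le 4), le_min_iff]
  constructor
  · calc y ^ 3 = y ^ 2 * y := pow_succ y 2
      _ ≤ 2 * (k * p) * (2 * (p - 1)) := by gcongr; omega
      _ = 4 * (k * p * (p - 1)) := by ring
  · calc y ^ 3 = y ^ 2 * y := pow_succ y 2
      _ ≤ 2 * r * (2 * 2 ^ β) := by gcongr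
      _ = 4 * (r * 2 ^ β) := by ring

lemma LeastPrimeBound.exists_isBlockDecomposition (h : LeastPrimeBound C s) (hs : 0 ≤ s)
    {n y : ℕ} (hn : n ≠ 0) (hy : 2 ≤ y) (hny : 2 * n ≤ y ^ 3)
    (hC : 2 * (C * (16 * (y : ℝ) ^ 2) ^ s) ≤ n) :
    ∃ p k r β, IsBlockDecomposition n p k r β ∧
      y ^ 3 ≤ 4 * min (k * p * (p - 1)) (r * 2 ^ β) := by
  obtain ⟨p, hp, hpn, hyp, hpy⟩ := exists_prime_not_dvd hn (by omega) (by omega : n ≤ y ^ 3)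
  obtain ⟨β, hβy, hyβ⟩ : ∃ β, 2 ^ β ≤ y ∧ y < 2 * 2 ^ β :=
    ⟨Nat.log 2 y, Nat.pow_log_le_self 2 (by omega),
      pow_succ' 2 _ ▸ Nat.lt_pow_succ_log_self (by norm_num) y⟩
  have hβ : β ≠ 0 := by
    rintro rfl
    omega
  obtain ⟨r, hr, hrn, hrβ, hpr, hrC⟩ := h.exists_modEq_modEq hp.ne_zero (by positivity)
    (dvd_pow_self 2 hβ) (((Nat.coprime_primes hp Nat.prime_two).2 (by omega)).pow_right β)
    (hp.coprime_iff_not_dvd.2 hpn).symm (Nat.coprime_one_left _)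
  have hr_le : 2 * r ≤ n := by
    have hm : 2 * (p * 2 ^ β) ≤ 16 * y ^ 2 := by
      calc 2 * (p * 2 ^ β) ≤ 2 * (8 * y * y) := by gcongr
        _ = 16 * y ^ 2 := by ring
    have hmR : ((2 * (p * 2 ^ β) : ℕ) : ℝ) ≤ 16 * (y : ℝ) ^ 2 := by exact_mod_cast hm
    have hrR : (r : ℝ) ≤ C * (16 * (y : ℝ) ^ 2) ^ s := by
      have := h.pos
      exact hrC.trans (by gcongr)
    exact_mod_cast (by linarith : 2 * (r : ℝ) ≤ n)
  have hr_ge : y ^ 2 ≤ 2 * r := by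
    calc y ^ 2 = y * y := sq y
      _ ≤ p * (2 * 2 ^ β) := by gcongr
      _ = 2 * (p * 2 ^ β) := by ring
      _ ≤ 2 * r := by gcongr
  have hn_lt : n < p * r := by
    have : y * y ^ 2 < p * (2 * r) := mul_lt_mul hyp hr_ge (pow_pos (by omega) 2) (Nat.zero_le p)
    linarith [pow_succ' y 2]
  obtain ⟨k, hk⟩ := exists_isBlockDecomposition_of_modEq hp hr hrn
    ((Nat.modEq_iff_dvd' hr.one_le).1 hrβ.symm)
    ((Nat.le_mul_of_pos_right p (by positivity)).trans hpr) (by omega) hn_lt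
  exact ⟨p, k, r, β, hk, hk.pow_three_le hyp hr_le hr_ge hyβ.le⟩

lemma LeastPrimeBound.exists_isBlockDecomposition_of_real (h : LeastPrimeBound C s) (hs : 0 ≤ s)
    {n : ℕ} {x : ℝ} (hn : n ≠ 0) (hx : 2 ≤ x) (hnx : 16 * n ≤ x ^ 3)
    (hC : 2 * (C * (16 * x ^ 2) ^ s) ≤ n) :
    ∃ p k r β, IsBlockDecomposition n p k r β ∧
      x ^ 3 ≤ 32 * (min (k * p * (p - 1)) (r * 2 ^ β) : ℕ) := by
  set y := ⌊x⌋₊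
  have hyx : (y : ℝ) ≤ x := Nat.floor_le (by linarith)
  have hy : 2 ≤ y := Nat.le_floor hx
  have hxy : x ^ 3 ≤ 8 * (y : ℝ) ^ 3 := by
    have hy1 : (1 : ℝ) ≤ y := by exact_mod_cast (by omega : 1 ≤ y)
    calc x ^ 3 ≤ (2 * (y : ℝ)) ^ 3 := by
          gcongr
          linarith [Nat.lt_floor_add_one x]
      _ = 8 * (y : ℝ) ^ 3 := by ring
  have hCy : 2 * (C * (16 * (y : ℝ) ^ 2) ^ s) ≤ n := by
    have := h.pos
    exact hC.trans' (by gcongr)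
  obtain ⟨p, k, r, β, hdecomp, hle⟩ := h.exists_isBlockDecomposition hs hn hy
    (by exact_mod_cast (by linarith : 2 * (n : ℝ) ≤ (y : ℝ) ^ 3)) hCy
  have hleR : (y : ℝ) ^ 3 ≤ 4 * (min (k * p * (p - 1)) (r * 2 ^ β) : ℕ) := by exact_mod_cast hle
  exact ⟨p, k, r, β, hdecomp, by linarith⟩

end PrimesInProgressions

section Asymptotics

open Filter

lemma eventually_const_mul_rpow_lt_rpow (c : ℝ) {a b : ℝ} (hab : a < b) :
    ∀ᶠ x : ℝ in atTop, c * x ^ a < x ^ b := by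
  filter_upwards [(tendsto_rpow_atTop (sub_pos.2 hab)).eventually_gt_atTop c,
    eventually_gt_atTop 0] with x hcx hx
  calc c * x ^ a < x ^ (b - a) * x ^ a := by gcongr
    _ = x ^ b := by rw [← Real.rpow_add hx, sub_add_cancel]

theorem LeastPrimeBound.eventually_exists_isBlockDecomposition {C δ ε : ℝ} (hδ : 0 < δ)
    (hδ' : δ < 1 / 6) (hδε : 3 * δ < ε) (h : LeastPrimeBound C (1 + δ)) :
    ∀ᶠ n : ℕ in atTop, ∃ p k r β, IsBlockDecomposition n p k r β ∧
      2 * (n : ℝ) ^ (3 / 2 - ε) < (min (k * p * (p - 1)) (r * 2 ^ β) : ℕ) := by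
  have hcube : ∀ n : ℝ, 0 ≤ n → (n ^ (1 / 2 - δ)) ^ 3 = n ^ (3 / 2 - 3 * δ) := fun n hn => by
    rw [← Real.rpow_mul_natCast hn]
    ring_nf
  have hsquare : ∀ n : ℝ, 0 ≤ n → (16 * (n ^ (1 / 2 - δ)) ^ 2) ^ (1 + δ) =
      16 ^ (1 + δ) * n ^ ((1 - 2 * δ) * (1 + δ)) := fun n hn => by
    rw [Real.mul_rpow (by norm_num) (by positivity), ← Real.rpow_mul_natCast hn,
      ← Real.rpow_mul hn]
    ring_nf
  have hlarge : ∀ᶠ x : ℝ in atTop, 2 ≤ x ^ (1 / 2 - δ) :=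
    (tendsto_rpow_atTop (by linarith)).eventually_ge_atTop 2
  have hcubic : ∀ᶠ x : ℝ in atTop, 16 * x ^ (1 : ℝ) < x ^ (3 / 2 - 3 * δ) :=
    eventually_const_mul_rpow_lt_rpow 16 (by linarith)
  have hprime : ∀ᶠ x : ℝ in atTop,
      2 * (C * 16 ^ (1 + δ)) * x ^ ((1 - 2 * δ) * (1 + δ)) < x ^ (1 : ℝ) :=
    eventually_const_mul_rpow_lt_rpow _ (by nlinarith)
  have hsparse : ∀ᶠ x : ℝ in atTop, 64 * x ^ (3 / 2 - ε) < x ^ (3 / 2 - 3 * δ) :=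
    eventually_const_mul_rpow_lt_rpow 64 (by linarith)
  filter_upwards [eventually_ne_atTop 0, tendsto_natCast_atTop_atTop.eventually
    (hlarge.and (hcubic.and (hprime.and hsparse)))]
    with n hn ⟨hlarge_n, hcubic_n, hprime_n, hsparse_n⟩
  rw [Real.rpow_one, ← hcube n n.cast_nonneg] at hcubic_n
  rw [Real.rpow_one] at hprime_n
  obtain ⟨p, k, r, β, hdecomp, hle⟩ := h.exists_isBlockDecomposition_of_real (by linarith) hn
    hlarge_n hcubic_n.le (by rw [hsquare n n.cast_nonneg]; linarith)
  rw [hcube n n.cast_nonneg] at hle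
  exact ⟨p, k, r, β, hdecomp, by linarith⟩

end Asymptotics

end

/-- Assuming Chowla's conjecture on the least Dirichlet prime, for every `ε > 0`,
every nontrivial monotone decreasing graph property of `n`-vertex graphs with at most
`n^{3/2-ε}` edges is evasive for all sufficiently large `n`. -/
theorem sparse_evasive_of_chowla
    (chowla : ∀ ε : ℝ, 0 < ε → ∃ C : ℝ, ∀ m : ℕ, 2 ≤ m → ∀ a : ℕ, Nat.Coprime a m →
      ∃ p : ℕ, p.Prime ∧ p % m = a % m ∧ (p : ℝ) ≤ C * (m : ℝ) ^ (1 + ε))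
    (ε : ℝ) (hε : 0 < ε) :
    ∃ N : ℕ, ∀ n : ℕ, N ≤ n → ∀ P : Set (SimpleGraph (Fin n)),
      IsGraphProperty P → MonotoneDecreasing P → P ≠ ∅ → P ≠ Set.univ →
      (∀ G ∈ P, (G.edgeSet.ncard : ℝ) ≤ (n : ℝ) ^ ((3 : ℝ) / 2 - ε)) →
      Evasive P := by
  obtain ⟨δ, hδ, hδ', hδε⟩ : ∃ δ : ℝ, 0 < δ ∧ δ < 1 / 6 ∧ 3 * δ < ε :=
    ⟨min (1 / 7) (ε / 4), by positivity, by linarith [min_le_left (1 / 7) (ε / 4)],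
      by linarith [min_le_right (1 / 7) (ε / 4)]⟩
  obtain ⟨C, hC : LeastPrimeBound C (1 + δ)⟩ := chowla δ hδ
  obtain ⟨N, hN⟩ := Filter.eventually_atTop.1
    (hC.eventually_exists_isBlockDecomposition hδ hδ' hδε)
  refine ⟨N, fun n hn P hP hmono hne _ hsparse => ?_⟩
  by_contra hev
  obtain ⟨p, k, r, β, hdecomp, hlarge⟩ := hN n hn
  obtain ⟨G, hG, hedges⟩ :=
    hdecomp.exists_many_edges hP hmono (Set.nonempty_iff_ne_empty.2 hne) hev
  have hedgesR : (min (k * p * (p - 1)) (r * 2 ^ β) : ℕ) ≤ 2 * (G.edgeSet.ncard : ℝ) := by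
    exact_mod_cast hedges
  linarith [hsparse G hG]
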